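/- arXiv:2106.14605 — 3 statements merged into one kernel-verified Lean document; each statement's English description precedes it below -/
import Mathlib

section
/- Let s ≥ 3 and n = 6·2^s − 3, and write e = 2^{s+1}. Consider the weight vectors ω_1 = (3,3,...,3,1,1) (s threes followed by two ones) and ω_2 = (3,3,...,3) (s+1 threes), both of degree n. Then: (i) the subspace of GL_4(F_2)-invariants of the weight subquotient (Q_n)^{ω_1} is trivial; (ii) the subspace of GL_4(F_2)-invariants of (Q_n)^{ω_2} is one-dimensional, spanned by the class of the polynomial ζ* = x_2^{e−1}x_3^{e−1}x_4^{e−1} + x_1^{e−1}x_3^{e−1}x_4^{e−1} + x_1^{e−1}x_2^{e−1}x_4^{e−1} + x_1^{e−1}x_2^{e−1}x_3^{e−1} + x_1x_2^{e−2}x_3^{e−1}x_4^{e−1} + x_1x_2^{e−1}x_3^{e−2}x_4^{e−1} + x_1x_2^{e−1}x_3^{e−1}x_4^{e−2} + x_1^{e−1}x_2x_3^{e−2}x_4^{e−1} + x_1^{e−1}x_2x_3^{e−1}x_4^{e−2} + x_1^{e−1}x_2^{e−1}x_3x_4^{e−2} + x_1^3x_2^{e−3}x_3^{e−2}x_4^{e−1}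 + x_1^3x_2^{e−3}x_3^{e−1}x_4^{e−2} + x_1^3x_2^{e−1}x_3^{e−3}x_4^{e−2} + x_1^{e−1}x_2^3x_3^{e−3}x_4^{e−2} + x_1^7x_2^{e−5}x_3^{e−3}x_4^{e−2}. -/
/-!
Common setup: the polynomial algebra `P_4 = F_2[x_1,x_2,x_3,x_4]` (variables `X 0, ..., X 3`),
the Steenrod action, hit polynomials, the cohit spaces `Q_n`, and the (induced) actions of
`GL_4(F_2)` and of the symmetric group `Σ_4` on `Q_n`.
-/

open MvPolynomial

noncomputable section

abbrev kk : Type := ZMod 2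
abbrev P4 : Type := MvPolynomial (Fin 4) kk

/-- The total Steenrod square: the algebra endomorphism of `P4` with `X i ↦ X i + (X i)^2`.
For `g` homogeneous of degree `d`, `Sq^t g` is the degree-`d+t` homogeneous component
of `sqTotal g`. -/
def sqTotal : P4 →ₐ[kk] P4 := aeval fun i => X i + X i ^ 2

/-- The homogeneous polynomials of degree `n`, i.e. `(P_4)_n`, as a submodule. -/
def homog (n : ℕ) : Submodule kk P4 := homogeneousSubmodule (Fin 4) kk n

/-- The subspace `H_n` of hit polynomials of degree `n`: it is spanned by the elements
`Sq^{n-d}(g) = (sqTotal g)_n` for `g` homogeneous of degree `d < n`, i.e. by all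
`∑_{t>0} Sq^t(f_t)` with `f_t ∈ (P_4)_{n-t}`. -/
def hitSub (n : ℕ) : Submodule kk P4 :=
  Submodule.span kk
    {p | ∃ d, d < n ∧ ∃ g ∈ homog d, p = homogeneousComponent n (sqTotal g)}

/-- The cohit space `Q_n = (P_4)_n / H_n`. -/
abbrev Qn (n : ℕ) :=
  ↥(homog n) ⧸ ((hitSub n).comap (homog n).subtype)

/-- Projection of a polynomial onto its degree-`n` part, landing in `homog n`. -/
def toHomog (n : ℕ) : P4 →ₗ[kk] homog n :=
  (homogeneousComponent n).codRestrict (homog n) fun f => homogeneousComponent_mem n f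

/-- The class in `Q_n` of (the degree-`n` component of) a polynomial.  For `f`
homogeneous of degree `n` this is the class `[f]` of `f`. -/
def Qmk (n : ℕ) : P4 →ₗ[kk] Qn n :=
  ((hitSub n).comap (homog n).subtype).mkQ.comp (toHomog n)

/-- Substitution action of a matrix `M`: the algebra endomorphism `X i ↦ ∑ j M i j • X j`. -/
def substM (M : Matrix (Fin 4) (Fin 4) kk) : P4 →ₐ[kk] P4 :=
  aeval fun i => ∑ j, M i j • X j

/-- The set of invertible `4 × 4` matrices over `F_2`, i.e. `GL_4(F_2)`. -/
def glSet : Set (Matrix (Fin 4) (Fin 4) kk) := {M | IsUnit M}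

/-- The set of permutation matrices, i.e. `Σ_4 ⊆ GL_4(F_2)`. -/
def permSet : Set (Matrix (Fin 4) (Fin 4) kk) :=
  {M | ∃ σ : Equiv.Perm (Fin 4), M = σ.toPEquiv.toMatrix}

/-- Homogeneous polynomials of degree `n` whose class in `Q_n` is invariant under every
element of `G` (the action on classes being induced by `substM`): for every `M ∈ G`,
`M·f - f` is hit. -/
def invPre (n : ℕ) (G : Set (Matrix (Fin 4) (Fin 4) kk)) : Submodule kk P4 :=
  homog n ⊓ ⨅ M ∈ G, (hitSub n).comap ((substM M).toLinearMap - LinearMap.id)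

/-- The subspace `(Q_n)^G` of `G`-invariant classes in `Q_n`. -/
def QInv (n : ℕ) (G : Set (Matrix (Fin 4) (Fin 4) kk)) : Submodule kk (Qn n) :=
  (invPre n G).map (Qmk n)

/-- The `Σ_4`-submodule of `Q_n` generated by the classes of the polynomials in `S`:
the span of the classes of all the permuted polynomials `σ · f`, `σ ∈ Σ_4`, `f ∈ S`. -/
def permSpan (n : ℕ) (S : Set P4) : Submodule kk (Qn n) :=
  Submodule.span kk
    {c | ∃ σ : Equiv.Perm (Fin 4), ∃ f ∈ S, c = Qmk n (rename (⇑σ) f)}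

/-- The weight vector of an exponent vector `d`: `wv d j = ∑ i (j-th binary digit of d i)`
(indexed from `j = 0`, so `wv d (j-1)` is `ω_j(x^d)` in the literature). -/
def wv (d : Fin 4 →₀ ℕ) (j : ℕ) : ℕ := ∑ i, d i / 2 ^ j % 2

/-- Strict left-lexicographic order on weight vectors. -/
def wLt (a b : ℕ → ℕ) : Prop := ∃ j, (∀ i, i < j → a i = b i) ∧ a j < b j

/-- Left-lexicographic order on weight vectors. -/
def wLe (a b : ℕ → ℕ) : Prop := a = b ∨ wLt a b

/-- `(P_4)_n^{ω}`: the span of the degree-`n` monomials of weight `≤ ω`. -/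
def Pw (n : ℕ) (w : ℕ → ℕ) : Submodule kk P4 :=
  Submodule.span kk
    {f | ∃ d : Fin 4 →₀ ℕ, (∑ i, d i) = n ∧ wLe (wv d) w ∧ f = monomial d 1}

/-- `(P_4)_n^{<ω}`: the span of the degree-`n` monomials of weight `< ω`. -/
def PwLt (n : ℕ) (w : ℕ → ℕ) : Submodule kk P4 :=
  Submodule.span kk
    {f | ∃ d : Fin 4 →₀ ℕ, (∑ i, d i) = n ∧ wLt (wv d) w ∧ f = monomial d 1}

/-- The denominator `(H_n ∩ (P_4)_n^{ω}) + (P_4)_n^{<ω}` of the weight subquotient. -/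
def wDenom (n : ℕ) (w : ℕ → ℕ) : Submodule kk P4 :=
  (hitSub n ⊓ Pw n w) ⊔ PwLt n w

/-- The weight subquotient `(Q_n)^{ω} = (P_4)_n^{ω} / ((H_n ∩ (P_4)_n^{ω}) + (P_4)_n^{<ω})`. -/
abbrev Qw (n : ℕ) (w : ℕ → ℕ) :=
  ↥(Pw n w) ⧸ ((wDenom n w).comap (Pw n w).subtype)

/-- The class `[f]_ω` in `(Q_n)^ω` of an element of `(P_4)_n^{ω}`. -/
def QwMk (n : ℕ) (w : ℕ → ℕ) : Pw n w →ₗ[kk] Qw n w :=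
  ((wDenom n w).comap (Pw n w).subtype).mkQ

/-- The subspace of `G`-invariant classes of `(Q_n)^{ω}` (the action being induced by
`substM`): the image of the subspace of those `f ∈ (P_4)_n^{ω}` with `M·f ≡_ω f`
for all `M ∈ G`. -/
def QwInv (n : ℕ) (w : ℕ → ℕ) (G : Set (Matrix (Fin 4) (Fin 4) kk)) :
    Submodule kk (Qw n w) :=
  Submodule.map (QwMk n w)
    (Submodule.comap (Pw n w).subtype
      (⨅ M ∈ G, (wDenom n w).comap ((substM M).toLinearMap - LinearMap.id)))

/-- The image in `(Q_n)^{ω}` of the span of a set `S ⊆ (P_4)_n^{ω}` of polynomials. -/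
def QwSpanOf (n : ℕ) (w : ℕ → ℕ) (S : Set P4) : Submodule kk (Qw n w) :=
  Submodule.map (QwMk n w) (Submodule.comap (Pw n w).subtype (Submodule.span kk S))

/-- The polynomial `ζ*` (with `e = 2^{s+1}` and `x_i = X (i-1)`). -/
def zetaStar (e : ℕ) : P4 :=
  X 1 ^ (e - 1) * X 2 ^ (e - 1) * X 3 ^ (e - 1) +
    X 0 ^ (e - 1) * X 2 ^ (e - 1) * X 3 ^ (e - 1) +
    X 0 ^ (e - 1) * X 1 ^ (e - 1) * X 3 ^ (e - 1) +
    X 0 ^ (e - 1) * X 1 ^ (e - 1) * X 2 ^ (e - 1) +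
    X 0 * X 1 ^ (e - 2) * X 2 ^ (e - 1) * X 3 ^ (e - 1) +
    X 0 * X 1 ^ (e - 1) * X 2 ^ (e - 2) * X 3 ^ (e - 1) +
    X 0 * X 1 ^ (e - 1) * X 2 ^ (e - 1) * X 3 ^ (e - 2) +
    X 0 ^ (e - 1) * X 1 * X 2 ^ (e - 2) * X 3 ^ (e - 1) +
    X 0 ^ (e - 1) * X 1 * X 2 ^ (e - 1) * X 3 ^ (e - 2) +
    X 0 ^ (e - 1) * X 1 ^ (e - 1) * X 2 * X 3 ^ (e - 2) +
    X 0 ^ 3 * X 1 ^ (e - 3) * X 2 ^ (e - 2) * X 3 ^ (e - 1) +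
    X 0 ^ 3 * X 1 ^ (e - 3) * X 2 ^ (e - 1) * X 3 ^ (e - 2) +
    X 0 ^ 3 * X 1 ^ (e - 1) * X 2 ^ (e - 3) * X 3 ^ (e - 2) +
    X 0 ^ (e - 1) * X 1 ^ 3 * X 2 ^ (e - 3) * X 3 ^ (e - 2) +
    X 0 ^ 7 * X 1 ^ (e - 5) * X 2 ^ (e - 3) * X 3 ^ (e - 2)

namespace S13

/-- characteristic two helpers -/
theorem sq_add (a b : P4) : (a + b) ^ 2 = a ^ 2 + b ^ 2 := add_pow_char a b 2

theorem sq_sum {ι : Type} (t : Finset ι) (f : ι → P4) : (∑ i ∈ t, f i) ^ 2 = ∑ i ∈ t, f i ^ 2 :=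
  sum_pow_char 2 t f

theorem kk_cases (c : kk) : c = 0 ∨ c = 1 := by
  revert c; decide

theorem sq_smul (c : kk) (a : P4) : (c • a) ^ 2 = c • a ^ 2 := by
  rcases kk_cases c with rfl | rfl <;> simp

/-- coordinatewise half of an exponent vector -/
def half (d : Fin 4 →₀ ℕ) : Fin 4 →₀ ℕ := d.mapRange (· / 2) (by simp)
def par (d : Fin 4 →₀ ℕ) : Fin 4 →₀ ℕ := d.mapRange (· % 2) (by simp)

@[simp] theorem half_apply (d : Fin 4 →₀ ℕ) (i) : half d i = d i / 2 := rfl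
@[simp] theorem par_apply (d : Fin 4 →₀ ℕ) (i) : par d i = d i % 2 := rfl

theorem par_half (d : Fin 4 →₀ ℕ) : par d + 2 • half d = d := by
  ext i; simp; omega

theorem wv_zero (d) : wv d 0 = ∑ i, d i % 2 := by simp [wv]
theorem wv_succ (d j) : wv d (j + 1) = wv (half d) j := by
  simp only [wv, half_apply, pow_succ', Nat.div_div_eq_div_mul]

theorem deg_eq (d : Fin 4 →₀ ℕ) : d.degree = ∑ i, d i := by
  rw [Finsupp.degree_eq_sum]

theorem coeff_sq_two (G : P4) (y : Fin 4 →₀ ℕ) : coeff (2 • y) (G ^ 2) = coeff y G := by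
  rw [← expand_zmod]; exact coeff_expand_smul 2 (by norm_num) G y

theorem coeff_sq_ne {G : P4} {x : Fin 4 →₀ ℕ} (h : coeff x (G ^ 2) ≠ 0) :
    2 • half x = x := by
  ext i
  by_contra hi
  apply h
  rw [← expand_zmod]
  apply coeff_expand_of_not_dvd (i := i)
  simp at hi; omega

theorem support_sq {G : P4} {x : Fin 4 →₀ ℕ} (h : x ∈ (G ^ 2).support) :
    ∃ y ∈ G.support, x = 2 • y := by
  rw [mem_support_iff] at h
  have := coeff_sq_ne h
  refine ⟨half x, ?_, this.symm⟩
  rw [← this, coeff_sq_two] at h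
  exact mem_support_iff.2 h

theorem monomial_sq (d : Fin 4 →₀ ℕ) : (monomial d (1 : kk)) ^ 2 = monomial (2 • d) 1 := by
  rw [monomial_pow]; simp

theorem monomial_split (d : Fin 4 →₀ ℕ) :
    (monomial d (1 : kk)) = monomial (par d) 1 * (monomial (half d) 1) ^ 2 := by
  rw [monomial_sq, monomial_mul, par_half]; simp

/-- core coefficient extraction lemma -/
theorem coefCore (q G : P4) (ep d' : Fin 4 →₀ ℕ) (r : ℕ) (hq : q.IsHomogeneous r)
    (hep : ∀ i, ep i ≤ 1) (hr : r ≤ ∑ i, ep i) :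
    coeff (ep + 2 • d') (q * G ^ 2) = coeff ep q * coeff d' G := by
  classical
  rw [coeff_mul, Finset.sum_eq_single (ep, 2 • d')]
  · simp only [coeff_sq_two]
  · rintro ⟨x, y⟩ hxy hne
    by_contra hc
    simp only at hc
    rw [Finset.HasAntidiagonal.mem_antidiagonal] at hxy
    simp only at hxy
    have h1 := left_ne_zero_of_mul hc
    have h2 := coeff_sq_ne (right_ne_zero_of_mul hc)
    have h3 : ∑ i, x i = r := by
      rw [← deg_eq]; by_contra h; exact h1 (hq.coeff_eq_zero h)
    have h4 : ∀ i, ep i ≤ x i := by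
      intro i
      have a := DFunLike.congr_fun hxy i
      have b := DFunLike.congr_fun h2 i
      have c := hep i
      simp at a b
      omega
    have h5 : ∀ i, ep i = x i := by
      by_contra hh
      push Not at hh
      obtain ⟨i, hi⟩ := hh
      have : ∑ i, ep i < ∑ i, x i :=
        Finset.sum_lt_sum (fun i _ => h4 i) ⟨i, Finset.mem_univ _, lt_of_le_of_ne (h4 i) hi⟩
      omega
    have h6 : ep = x := Finsupp.ext h5
    subst h6
    exact hne (by rw [add_left_cancel hxy])
  · intro h; simp at h

theorem coefCore_zero (q G : P4) (ep d' : Fin 4 →₀ ℕ) (r : ℕ) (hq : q.IsHomogeneous r)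
    (hep : ∀ i, ep i ≤ 1) (hr : r < ∑ i, ep i) :
    coeff (ep + 2 • d') (q * G ^ 2) = 0 := by
  rw [coefCore q G ep d' r hq hep hr.le, hq.coeff_eq_zero, zero_mul]
  rw [deg_eq]; omega

/-- products of three distinct variables -/
def cc (i : Fin 4) : P4 := ∏ k ∈ Finset.univ.erase i, X k
def ee (i : Fin 4) : Fin 4 →₀ ℕ := Finsupp.equivFunOnFinite.symm (fun k => if k = i then 0 else 1)
@[simp] theorem ee_apply (i k) : ee i k = if k = i then 0 else 1 := rfl

theorem cc_eq (i : Fin 4) : cc i = monomial (ee i) 1 := by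
  rw [cc, monomial_eq, Finsupp.prod_fintype _ _ (by simp)]
  simp only [C_1, one_mul, ee_apply]
  rw [← Finset.mul_prod_erase Finset.univ _ (Finset.mem_univ i)]
  simp only [if_true, pow_zero, one_mul]
  apply Finset.prod_congr rfl
  intro k hk
  rw [if_neg (Finset.ne_of_mem_erase hk), pow_one]

theorem sum_ee (i : Fin 4) : ∑ k, ee i k = 3 := by
  revert i; simp only [ee_apply]; decide

theorem cc_homog (i) : (cc i).IsHomogeneous 3 := by
  rw [cc_eq]; apply isHomogeneous_monomial; rw [deg_eq, sum_ee]

def mo : List (Fin 4) → P4 → P4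
  | [], g => g
  | i :: L, g => cc i * (mo L g) ^ 2

def dg (m : ℕ) : ℕ → ℕ
  | 0 => m
  | k + 1 => 2 * dg m k + 3

def w3 (b : ℕ → ℕ) : ℕ → ℕ → ℕ
  | 0 => b
  | k + 1 => fun j => match j with
    | 0 => 3
    | j + 1 => w3 b k j

theorem mo_append (L L' : List (Fin 4)) (g) : mo (L ++ L') g = mo L (mo L' g) := by
  induction L with
  | nil => rfl
  | cons i L ih => simp [mo, ih]

theorem mo_add (L : List (Fin 4)) (g h) : mo L (g + h) = mo L g + mo L h := by
  induction L with
  | nil => rfl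
  | cons i L ih => simp [mo, ih, sq_add, mul_add]

theorem mo_zero (L : List (Fin 4)) : mo L 0 = 0 := by
  induction L with
  | nil => rfl
  | cons i L ih => simp [mo, ih]

theorem mo_sum {ι : Type} (L : List (Fin 4)) (t : Finset ι) (f : ι → P4) :
    mo L (∑ i ∈ t, f i) = ∑ i ∈ t, mo L (f i) := by
  classical
  induction t using Finset.induction_on with
  | empty => simp [mo_zero]
  | insert a t ha ih => rw [Finset.sum_insert ha, Finset.sum_insert ha, mo_add, ih]

theorem step_homog {g : P4} {r : ℕ} (i) (h : g.IsHomogeneous r) :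
    (cc i * g ^ 2).IsHomogeneous (2 * r + 3) := by
  have := (cc_homog i).mul (h.pow 2)
  convert this using 1; ring

theorem mo_homog {m k : ℕ} (L : List (Fin 4)) (g : P4) (h : g.IsHomogeneous (dg m k)) :
    (mo L g).IsHomogeneous (dg m (k + L.length)) := by
  induction L with
  | nil => exact h
  | cons i L ih => exact step_homog i ih

/-- wLt recursion -/
theorem wLt_iff (a b : ℕ → ℕ) :
    wLt a b ↔ a 0 < b 0 ∨ (a 0 = b 0 ∧ wLt (fun j => a (j+1)) (fun j => b (j+1))) := by
  constructor
  · rintro ⟨j, h1, h2⟩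
    cases j with
    | zero => exact Or.inl h2
    | succ j => exact Or.inr ⟨h1 0 (by omega), j, fun i hi => h1 (i+1) (by omega), h2⟩
  · rintro (h | ⟨h0, j, h1, h2⟩)
    · exact ⟨0, by simp, h⟩
    · refine ⟨j+1, fun i hi => ?_, h2⟩
      cases i with
      | zero => exact h0
      | succ i => exact h1 i (by omega)

theorem wLt_w3_iff (d b k) :
    wLt (wv d) (w3 b (k+1)) ↔ wv d 0 < 3 ∨ (wv d 0 = 3 ∧ wLt (wv (half d)) (w3 b k)) := by
  rw [wLt_iff]
  have : (fun j => wv d (j+1)) = wv (half d) := funext (wv_succ d)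
  rw [this]; rfl

theorem wLt_irrefl (a) : ¬ wLt a a := by
  rintro ⟨j, _, h⟩; exact lt_irrefl _ h

theorem PwLt_of (n w) (p : P4) (h1 : p.IsHomogeneous n) (h2 : ∀ d ∈ p.support, wLt (wv d) w) :
    p ∈ PwLt n w := by
  rw [← support_sum_monomial_coeff p]
  apply Submodule.sum_mem
  intro d hd
  rw [← mul_one (coeff d p), ← smul_eq_mul, ← smul_monomial]
  apply Submodule.smul_mem
  apply Submodule.subset_span
  refine ⟨d, ?_, h2 d hd, rfl⟩
  rw [← deg_eq]
  by_contra h; exact (mem_support_iff.1 hd) (h1.coeff_eq_zero h)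

theorem homog_induction {n : ℕ} {C : P4 → Prop} (h0 : C 0) (hadd : ∀ a b, C a → C b → C (a + b))
    (hmono : ∀ d : Fin 4 →₀ ℕ, ∑ i, d i = n → C (monomial d 1)) {p : P4} (hp : p.IsHomogeneous n) :
    C p := by
  rw [← support_sum_monomial_coeff p]
  apply Finset.sum_induction _ C hadd h0
  intro d hd
  have h1 : coeff d p = 1 := (kk_cases _).resolve_left (mem_support_iff.1 hd)
  rw [h1]
  apply hmono
  rw [← deg_eq]
  by_contra h; exact (mem_support_iff.1 hd) (hp.coeff_eq_zero h)

theorem span_induction2 {S : Set P4} {C : P4 → Prop} (h0 : C 0)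
    (hadd : ∀ a b, C a → C b → C (a + b)) (hS : ∀ x ∈ S, C x) {p : P4}
    (hp : p ∈ Submodule.span kk S) : C p := by
  induction hp using Submodule.span_induction with
  | mem x h => exact hS x h
  | zero => exact h0
  | add x y _ _ hx hy => exact hadd x y hx hy
  | smul c x _ hx => rcases kk_cases c with rfl | rfl <;> simpa

theorem mono_step (i) (d : Fin 4 →₀ ℕ) :
    cc i * (monomial d (1 : kk)) ^ 2 = monomial (ee i + 2 • d) 1 := by
  rw [cc_eq, monomial_sq, monomial_mul]; simp

theorem half_step (i d) : half (ee i + 2 • d) = d := by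
  ext k; simp; split_ifs <;> omega

theorem wv_step (i d) : wv (ee i + 2 • d) 0 = 3 := by
  rw [wv_zero, ← sum_ee i]
  apply Finset.sum_congr rfl
  intro k _
  simp; split_ifs <;> omega

theorem sum_step (i) (d : Fin 4 →₀ ℕ) : ∑ k, (ee i + 2 • d) k = 2 * (∑ k, d k) + 3 := by
  simp only [Finsupp.add_apply, Finsupp.smul_apply, smul_eq_mul, Finset.sum_add_distrib,
    ← Finset.mul_sum]
  rw [sum_ee]; omega

theorem PwLt_step {n b k} {g : P4} (i) (h : g ∈ PwLt n (w3 b k)) :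
    cc i * g ^ 2 ∈ PwLt (2 * n + 3) (w3 b (k + 1)) := by
  refine span_induction2 (C := fun g => cc i * g ^ 2 ∈ PwLt (2 * n + 3) (w3 b (k + 1)))
    ?_ ?_ ?_ h
  · simp
  · intro x y hx hy
    rw [sq_add, mul_add]
    exact add_mem hx hy
  · rintro _ ⟨d, hd, hl, rfl⟩
    rw [mono_step]
    apply Submodule.subset_span
    refine ⟨_, ?_, ?_, rfl⟩
    · rw [sum_step, hd]
    · rw [wLt_w3_iff, half_step, wv_step]
      exact Or.inr ⟨rfl, hl⟩

/-- decomposition of an exponent with `wv d 0 = 3` -/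
theorem exists_step (d : Fin 4 →₀ ℕ) (h : wv d 0 = 3) : ∃ i, d = ee i + 2 • half d := by
  rw [wv_zero, Fin.sum_univ_four] at h
  have key : ∃ i, ∀ k, d k % 2 = ee i k := by
    have h0 := Nat.mod_lt (d 0) (show 2 > 0 by norm_num)
    have h1 := Nat.mod_lt (d 1) (show 2 > 0 by norm_num)
    have h2 := Nat.mod_lt (d 2) (show 2 > 0 by norm_num)
    have h3 := Nat.mod_lt (d 3) (show 2 > 0 by norm_num)
    have : d 0 % 2 = 0 ∨ d 1 % 2 = 0 ∨ d 2 % 2 = 0 ∨ d 3 % 2 = 0 := by omega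
    rcases this with h | h | h | h
    · refine ⟨0, fun k => ?_⟩
      fin_cases k <;> simp <;> omega
    · refine ⟨1, fun k => ?_⟩
      fin_cases k <;> simp <;> omega
    · refine ⟨2, fun k => ?_⟩
      fin_cases k <;> simp <;> omega
    · refine ⟨3, fun k => ?_⟩
      fin_cases k <;> simp <;> omega
  obtain ⟨i, hi⟩ := key
  refine ⟨i, ?_⟩
  ext k
  have := hi k
  simp only [Finsupp.add_apply, Finsupp.smul_apply, half_apply, smul_eq_mul]
  omega

end S13

namespace S13

theorem mem_supp_mul {p q : P4} {d : Fin 4 →₀ ℕ} (h : d ∈ (p * q).support) :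
    ∃ x ∈ p.support, ∃ y ∈ q.support, d = x + y := by
  classical
  have := support_mul p q h
  obtain ⟨x, hx, y, hy, rfl⟩ := Finset.mem_add.1 this
  exact ⟨x, hx, y, hy, rfl⟩

def Lo : Submodule kk P4 where
  carrier := {p | ∀ d ∈ p.support, wv d 0 < 3}
  zero_mem' := by simp
  add_mem' := by
    classical
    intro a b ha hb d hd
    rcases Finset.mem_union.1 (support_add hd) with h | h
    · exact ha d h
    · exact hb d h
  smul_mem' := by
    intro c x hx
    rcases kk_cases c with rfl | rfl
    · simp
    · simpa using hx

theorem Lo_mul_sq {p : P4} (hp : p ∈ Lo) (g : P4) : p * g ^ 2 ∈ Lo := by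
  intro d hd
  obtain ⟨x, hx, y, hy, rfl⟩ := mem_supp_mul hd
  obtain ⟨z, hz, rfl⟩ := support_sq hy
  have := hp x hx
  rw [wv_zero] at this ⊢
  have e : ∑ i, (x + 2 • z) i % 2 = ∑ i, x i % 2 := Finset.sum_congr rfl (fun i _ => by
    simp only [Finsupp.add_apply, Finsupp.smul_apply, smul_eq_mul]; omega)
  rw [e]; exact this

theorem Lo_homog {p : P4} {r : ℕ} (hp : p.IsHomogeneous r) (hr : r < 3) : p ∈ Lo := by
  intro d hd
  have : ∑ i, d i = r := by
    rw [← deg_eq]; by_contra h; exact (mem_support_iff.1 hd) (hp.coeff_eq_zero h)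
  rw [wv_zero]
  refine lt_of_le_of_lt (Finset.sum_le_sum fun i _ => Nat.mod_le (d i) 2) ?_
  omega

theorem Lo_hcomp {p : P4} (hp : p ∈ Lo) (n : ℕ) : homogeneousComponent n p ∈ Lo := by
  intro d hd
  apply hp
  rw [mem_support_iff, coeff_homogeneousComponent] at hd
  rw [mem_support_iff]
  intro h; apply hd; simp [h]

theorem Lo_PwLt {p : P4} {n : ℕ} (hp : p ∈ Lo) (hn : p.IsHomogeneous n) (b k) :
    p ∈ PwLt n (w3 b (k+1)) := by
  apply PwLt_of _ _ _ hn
  intro d hd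
  rw [wLt_w3_iff]
  exact Or.inl (hp d hd)

def Ord (r : ℕ) : Submodule kk P4 where
  carrier := {p | ∀ d ∈ p.support, r ≤ d.degree}
  zero_mem' := by simp
  add_mem' := by
    classical
    intro a b ha hb d hd
    rcases Finset.mem_union.1 (support_add hd) with h | h
    · exact ha d h
    · exact hb d h
  smul_mem' := by
    intro c x hx
    rcases kk_cases c with rfl | rfl
    · simp
    · simpa using hx

theorem Ord_mul {p q : P4} {a b c : ℕ} (hp : p ∈ Ord a) (hq : q ∈ Ord b) (h : c ≤ a + b) :
    p * q ∈ Ord c := by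
  intro d hd
  obtain ⟨x, hx, y, hy, rfl⟩ := mem_supp_mul hd
  have h1 := hp x hx
  have h2 := hq y hy
  rw [map_add]; omega

theorem Ord_zero (p : P4) : p ∈ Ord 0 := fun _ _ => Nat.zero_le _

theorem Ord_homog {p : P4} {r : ℕ} (hp : p.IsHomogeneous r) : p ∈ Ord r := by
  intro d hd
  by_contra h
  exact (mem_support_iff.1 hd) (hp.coeff_eq_zero (by omega))

theorem Ord_X (i : Fin 4) : (X i : P4) ∈ Ord 1 := Ord_homog (isHomogeneous_X _ i)

theorem Ord_hcomp {p : P4} {r n : ℕ} (hp : p ∈ Ord r) (h : n < r) :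
    homogeneousComponent n p = 0 := by
  ext d
  rw [coeff_homogeneousComponent, coeff_zero]
  split_ifs with hd
  · by_contra hc
    have := hp d (mem_support_iff.2 hc)
    omega
  · rfl

theorem sq_X (i : Fin 4) : sqTotal (X i) = X i * (1 + X i) := by
  simp [sqTotal]; ring

theorem sqTotal_low {y : P4} {r : ℕ} (hy : y.IsHomogeneous r) : sqTotal y - y ∈ Ord (r + 1) := by
  refine homog_induction (C := fun y => sqTotal y - y ∈ Ord (r + 1)) ?_ ?_ ?_ hy
  · simp
  · intro a b ha hb
    have : sqTotal (a + b) - (a + b) = (sqTotal a - a) + (sqTotal b - b) := by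
      rw [map_add]; ring
    rw [this]; exact add_mem ha hb
  · intro d hd
    have h1 : sqTotal (monomial d 1) = monomial d 1 * ∏ i, (1 + X i) ^ d i := by
      rw [monomial_eq, Finsupp.prod_fintype _ _ (by simp)]
      simp only [C_1, one_mul, map_prod, map_pow, sq_X, mul_pow, Finset.prod_mul_distrib]
    have h2 : sqTotal (monomial d 1) - monomial d 1
        = monomial d 1 * ((∏ i, (1 + X i) ^ d i) - 1) := by rw [h1]; ring
    rw [h2]
    refine Ord_mul (a := r) (b := 1) (Ord_homog (isHomogeneous_monomial _ (by rw [deg_eq, hd]))) ?_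
      le_rfl
    intro x hx
    by_contra hlt
    have h0 : x.degree = 0 := by omega
    rw [Finsupp.degree_eq_zero_iff] at h0
    subst h0
    apply mem_support_iff.1 hx
    rw [← constantCoeff_eq]
    simp

theorem hit_mem {n d : ℕ} (g : P4) (hg : g.IsHomogeneous d) (h : d < n) :
    homogeneousComponent n (sqTotal g) ∈ hitSub n :=
  Submodule.subset_span ⟨d, h, g, (mem_homogeneousSubmodule _ _).2 hg, rfl⟩

def AA : P4 := X 0 * X 1 * X 2 * X 3

theorem AA_eq (i : Fin 4) : AA = X i * cc i := by
  rw [cc, Finset.mul_prod_erase Finset.univ _ (Finset.mem_univ i), Fin.prod_univ_four, AA]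

theorem AA_homog : AA.IsHomogeneous 4 := by
  rw [AA_eq 0]
  exact (isHomogeneous_X _ 0).mul (cc_homog 0)

theorem hit1 (y : P4) (r : ℕ) (hy : y.IsHomogeneous r) :
    ∑ i, cc i * (X i * y) ^ 2 ∈ hitSub (2 * r + 5) := by
  have hA : (AA * y ^ 2).IsHomogeneous (2 * r + 4) := by
    have := AA_homog.mul (hy.pow 2)
    convert this using 1; ring
  have e1 : ∑ i, cc i * (X i * y) ^ 2 = ∑ i, X i * (AA * y ^ 2) := by
    apply Finset.sum_congr rfl
    intro i _
    rw [AA_eq i]; ring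
  have hS : (∑ i, X i * (AA * y ^ 2)).IsHomogeneous (2 * r + 5) := by
    apply IsHomogeneous.sum
    intro i _
    have := (isHomogeneous_X kk i).mul hA
    convert this using 1; ring
  have key := hit_mem (n := 2 * r + 5) _ hA (by omega)
  convert key using 1
  rw [e1]
  obtain ⟨ρ, hρ⟩ : ∃ ρ, ρ = sqTotal y - y := ⟨_, rfl⟩
  have hρ2 : sqTotal y = y + ρ := by rw [hρ]; ring
  have hρo : ρ ∈ Ord (r+1) := hρ ▸ sqTotal_low hy
  have e2 : sqTotal (AA * y ^ 2) = AA * y ^ 2 + ∑ i, X i * (AA * y ^ 2) +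
      ((AA * (X 0 * X 1 * ((1 + X 2) * (1 + X 3)) + X 0 * X 2 * (1 + X 3) + X 0 * X 3
        + X 1 * X 2 * (1 + X 3) + X 1 * X 3 + X 2 * X 3)) * y ^ 2
        + sqTotal AA * ρ ^ 2) := by
    rw [map_mul, map_pow, hρ2, sq_add, mul_add, ← add_assoc]
    congr 1
    rw [AA, map_mul, map_mul, map_mul, sq_X, sq_X, sq_X, sq_X, Fin.sum_univ_four]
    ring
  have hX2 : ∀ i j : Fin 4, (X i * X j : P4) ∈ Ord 2 :=
    fun i j => Ord_mul (Ord_X i) (Ord_X j) le_rfl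
  have hX2' : ∀ (i j : Fin 4) (p : P4), (X i * X j * p : P4) ∈ Ord 2 :=
    fun i j p => Ord_mul (hX2 i j) (Ord_zero p) le_rfl
  have hsA : sqTotal AA ∈ Ord 4 := by
    have := sqTotal_low AA_homog
    have h4 : sqTotal AA = (sqTotal AA - AA) + AA := by ring
    rw [h4]
    refine add_mem ?_ (Ord_homog AA_homog)
    intro d hd
    have := this d hd
    omega
  have e3 : ((AA * (X 0 * X 1 * ((1 + X 2) * (1 + X 3)) + X 0 * X 2 * (1 + X 3) + X 0 * X 3
        + X 1 * X 2 * (1 + X 3) + X 1 * X 3 + X 2 * X 3)) * y ^ 2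
        + sqTotal AA * ρ ^ 2) ∈ Ord (2 * r + 6) := by
    apply add_mem
    · refine Ord_mul (a := 6) (b := 2 * r) ?_ ?_ (by omega)
      · refine Ord_mul (a := 4) (b := 2) (Ord_homog AA_homog) ?_ (by omega)
        exact add_mem (add_mem (add_mem (add_mem (add_mem (hX2' _ _ _) (hX2' _ _ _)) (hX2 _ _))
          (hX2' _ _ _)) (hX2 _ _)) (hX2 _ _)
      · have := Ord_homog (hy.pow 2)
        rwa [mul_comm] at this
    · refine Ord_mul (a := 4) (b := 2 * r + 2) hsA ?_ (by omega)
      rw [pow_two]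
      exact Ord_mul hρo hρo (by omega)
  rw [e2, map_add, map_add, Ord_hcomp e3 (by omega), homogeneousComponent_eq_self hS,
    homogeneousComponent_of_mem ((mem_homogeneousSubmodule _ _).2 hA), if_neg (by omega)]
  simp


theorem sqTotal_cc_mul (i : Fin 4) (F : P4) : sqTotal (cc i) * F ^ 2 - cc i * F ^ 2 ∈ Lo := by
  classical
  have h1 : sqTotal (cc i) = ∏ k ∈ Finset.univ.erase i, (X k + X k ^ 2) := by
    rw [cc, map_prod]
    apply Finset.prod_congr rfl
    intro k _
    rw [sq_X]; ring
  rw [h1, Finset.prod_add, ← Finset.add_sum_erase _ _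
    (Finset.mem_powerset_self (Finset.univ.erase i)), add_mul, Finset.sdiff_self,
    Finset.prod_empty, mul_one, cc, add_sub_cancel_left, Finset.sum_mul]
  apply Submodule.sum_mem
  intro t ht
  rw [Finset.mem_erase, Finset.mem_powerset] at ht
  rw [Finset.prod_pow, mul_assoc, ← mul_pow]
  apply Lo_mul_sq
  have : (∏ k ∈ t, (X k : P4)).IsHomogeneous (∑ k ∈ t, 1) :=
    IsHomogeneous.prod _ _ _ (fun k _ => isHomogeneous_X _ k)
  apply Lo_homog this
  rw [Finset.sum_const, smul_eq_mul, mul_one]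
  have h2 := Finset.card_lt_card (Finset.ssubset_iff_subset_ne.2 ⟨ht.2, ht.1⟩)
  rw [Finset.card_erase_of_mem (Finset.mem_univ _)] at h2
  simpa using h2

theorem hcomp_step (i : Fin 4) (F : P4) (m : ℕ) :
    homogeneousComponent (2 * m + 3) (cc i * F ^ 2) = cc i * (homogeneousComponent m F) ^ 2 := by
  have h1 : cc i * F ^ 2 =
      ∑ j ∈ Finset.range (F.totalDegree + 1), cc i * (homogeneousComponent j F) ^ 2 := by
    conv_lhs => rw [← sum_homogeneousComponent F, sq_sum, Finset.mul_sum]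
  rw [h1, map_sum]
  have h2 : ∀ j, homogeneousComponent (2 * m + 3) (cc i * (homogeneousComponent j F) ^ 2)
      = if j = m then cc i * (homogeneousComponent j F) ^ 2 else 0 := by
    intro j
    have := step_homog i (homogeneousComponent_isHomogeneous j F)
    rw [homogeneousComponent_of_mem ((mem_homogeneousSubmodule _ _).2 this)]
    by_cases h : j = m
    · rw [if_pos h, if_pos (by omega)]
    · rw [if_neg h, if_neg (by omega)]
  simp only [h2, Finset.sum_ite_eq', Finset.mem_range]
  split_ifs with h
  · rfl
  · rw [homogeneousComponent_eq_zero _ _ (by omega)]; simp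

/-- The working denominators. -/
def DD (b : ℕ → ℕ) (m k : ℕ) : Submodule kk P4 := hitSub (dg m k) ⊔ PwLt (dg m k) (w3 b k)

theorem hit_step {n : ℕ} {g : P4} (i b k) (h : g ∈ hitSub n) :
    cc i * g ^ 2 ∈ hitSub (2 * n + 3) ⊔ PwLt (2 * n + 3) (w3 b (k + 1)) := by
  refine span_induction2 (C := fun g => cc i * g ^ 2 ∈
    hitSub (2 * n + 3) ⊔ PwLt (2 * n + 3) (w3 b (k + 1))) ?_ ?_ ?_ h
  · simp
  · intro x y hx hy
    rw [sq_add, mul_add]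
    exact add_mem hx hy
  · rintro _ ⟨d, hd, f, hf, rfl⟩
    have hf' : f.IsHomogeneous d := (mem_homogeneousSubmodule _ _).1 hf
    rw [← hcomp_step]
    have e1 : cc i * sqTotal f ^ 2 = sqTotal (cc i * f ^ 2) -
        (sqTotal (cc i) * sqTotal f ^ 2 - cc i * sqTotal f ^ 2) := by
      rw [map_mul, map_pow]; ring
    rw [e1, map_sub]
    apply sub_mem
    · exact Submodule.mem_sup_left (hit_mem _ (step_homog i hf') (by omega))
    · apply Submodule.mem_sup_right
      apply Lo_PwLt
      · exact Lo_hcomp (sqTotal_cc_mul i _) _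
      · exact homogeneousComponent_isHomogeneous _ _

theorem DD_step {b m k} {g : P4} (i) (h : g ∈ DD b m k) : cc i * g ^ 2 ∈ DD b m (k + 1) := by
  obtain ⟨x, hx, y, hy, rfl⟩ := Submodule.mem_sup.1 h
  rw [sq_add, mul_add]
  apply add_mem
  · exact hit_step i b k hx
  · exact Submodule.mem_sup_right (PwLt_step i hy)

theorem DD_mo {b m k} {g : P4} (L : List (Fin 4)) (h : g ∈ DD b m k) :
    mo L g ∈ DD b m (k + L.length) := by
  induction L with
  | nil => exact h
  | cons i L ih => exact DD_step i ih

theorem DD_low {b m k} {g p : P4} (hp : p ∈ Lo) (h : (p * g ^ 2).IsHomogeneous (dg m (k + 1))) :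
    p * g ^ 2 ∈ DD b m (k + 1) :=
  Submodule.mem_sup_right (Lo_PwLt (Lo_mul_sq hp g) h b k)


theorem relT {b m j} (z : P4) (r : ℕ) (hz : z.IsHomogeneous r) (hr : r + 1 = dg m j) (k : ℕ) :
    ∑ i, mo (List.replicate (k + 1) i) (X i * z) ∈ DD b m (j + (k + 1)) := by
  have key : ∀ k, ∃ y r', IsHomogeneous y r' ∧ r' + 1 = dg m (j + k) ∧
      ∀ i, X i * y = mo (List.replicate k i) (X i * z) := by
    intro k
    induction k with
    | zero => exact ⟨z, r, hz, hr, fun i => rfl⟩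
    | succ k ih =>
      obtain ⟨y, r', h1, h2, h3⟩ := ih
      refine ⟨AA * y ^ 2, 2 * r' + 4, ?_, ?_, ?_⟩
      · have := AA_homog.mul (h1.pow 2)
        convert this using 1; ring
      · change _ = 2 * dg m (j + k) + 3
        omega
      · intro i
        rw [List.replicate_succ, mo, ← h3, AA_eq i]; ring
  obtain ⟨y, r', h1, h2, h3⟩ := key k
  have h4 := hit1 y r' h1
  have h5 : 2 * r' + 5 = dg m (j + (k+1)) := by
    change _ = 2 * dg m (j + k) + 3
    omega
  rw [h5] at h4
  apply Submodule.mem_sup_left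
  convert h4 using 2 with i
  rw [List.replicate_succ, mo, ← h3]

end S13

namespace S13

abbrev QD (b : ℕ → ℕ) (m k : ℕ) := P4 ⧸ DD b m k
def cl (b : ℕ → ℕ) (m k : ℕ) : P4 →ₗ[kk] QD b m k := (DD b m k).mkQ

theorem cl_zero_iff {b m k} {f : P4} : cl b m k f = 0 ↔ f ∈ DD b m k := by
  rw [cl, Submodule.mkQ_apply, Submodule.Quotient.mk_eq_zero]

theorem cl_eq_iff {b m k} {f g : P4} : cl b m k f = cl b m k g ↔ f - g ∈ DD b m k := by
  rw [← cl_zero_iff, map_sub, sub_eq_zero]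

theorem two0 {V : Type*} [AddCommGroup V] [Module kk V] (x : V) : x + x = 0 := by
  rw [← two_smul kk x]
  have : (2 : kk) = 0 := by decide
  rw [this, zero_smul]

theorem neg0 {V : Type*} [AddCommGroup V] [Module kk V] (x : V) : -x = x :=
  neg_eq_of_add_eq_zero_left (two0 x)

theorem eq_of_add {V : Type*} [AddCommGroup V] [Module kk V] {x y : V} (h : x + y = 0) : x = y := by
  rw [eq_neg_of_add_eq_zero_left h, neg0]

theorem cl_step {b m k} {f g : P4} (i) (h : cl b m k f = cl b m k g) :
    cl b m (k + 1) (cc i * f ^ 2) = cl b m (k + 1) (cc i * g ^ 2) := by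
  rw [cl_eq_iff] at h ⊢
  have h1 := DD_step i h
  have h2 : (f - g) ^ 2 = f ^ 2 - g ^ 2 := by
    have := sq_add (f - g) g
    rw [sub_add_cancel] at this
    rw [this]; ring
  rw [h2, mul_sub] at h1
  exact h1

theorem cl_mo {b m k N} {f g : P4} (L : List (Fin 4)) (h : cl b m k f = cl b m k g)
    (hN : N = k + L.length) : cl b m N (mo L f) = cl b m N (mo L g) := by
  subst hN
  induction L with
  | nil => exact h
  | cons i L ih => exact cl_step i ih

theorem cl_mo0 {b m k N} {f : P4} (L : List (Fin 4)) (h : cl b m k f = 0)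
    (hN : N = k + L.length) : cl b m N (mo L f) = 0 := by
  have := cl_mo (g := 0) L (h.trans (map_zero _).symm) hN
  rwa [mo_zero, map_zero] at this

theorem sum4 {V : Type*} [AddCommMonoid V] (f : Fin 4 → V) {a b p q : Fin 4}
    (h : [a, b, p, q].Nodup) : ∑ i, f i = f a + f b + f p + f q := by
  have : (Finset.univ : Finset (Fin 4)) = {a, b, p, q} := by
    revert a b p q; decide
  rw [this, Finset.sum_insert, Finset.sum_insert, Finset.sum_insert, Finset.sum_singleton]
  · abel
  all_goals simp at h ⊢; tauto

theorem cc_three {a b p q : Fin 4} (h : [a, b, p, q].Nodup) : cc b = X a * (X p * X q) := by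
  have : (Finset.univ : Finset (Fin 4)).erase b = {a, p, q} := by
    revert a b p q; decide
  rw [cc, this, Finset.prod_insert, Finset.prod_insert, Finset.prod_singleton]
  all_goals simp at h ⊢; tauto

theorem ex_pq {a b : Fin 4} (h : a ≠ b) : ∃ p q : Fin 4, [a, b, p, q].Nodup := by
  revert a b; decide

theorem nodup_ba {a b p q : Fin 4} (h : [a, b, p, q].Nodup) : [b, a, p, q].Nodup := by
  revert a b p q; decide

theorem relW {bb m j N} {w : P4} (hw : w.IsHomogeneous (dg m j)) {a b : Fin 4} (hab : a ≠ b) (k : ℕ)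
    (hN : N = j + 1 + (k + 1)) :
    cl bb m N (mo (List.replicate (k + 1) a) (cc b * w ^ 2)) =
      cl bb m N (mo (List.replicate (k + 1) b) (cc a * w ^ 2)) := by
  obtain ⟨p, q, h⟩ := ex_pq hab
  have h2 := nodup_ba h
  subst hN
  have hz : (X p * X q * w ^ 2).IsHomogeneous (2 * dg m j + 2) := by
    have := ((isHomogeneous_X kk p).mul (isHomogeneous_X kk q)).mul (hw.pow 2)
    convert this using 1; ring
  have hr := relT (b := bb) (m := m) (j := j + 1) _ _ hz rfl k
  rw [← cl_zero_iff, map_sum, sum4 _ h] at hr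
  have low : ∀ p q : Fin 4, cl bb m (j + 1 + (k + 1))
      (mo (List.replicate (k + 1) p) (X q * (X p * w) ^ 2)) = 0 := by
    intro p q
    refine cl_mo0 (k := j + 1) _ ?_ (by simp)
    rw [cl_zero_iff]
    apply DD_low
    · exact Lo_homog (isHomogeneous_X kk q) (by omega)
    · have := (isHomogeneous_X kk q).mul (((isHomogeneous_X kk p).mul hw).pow 2)
      convert this using 1
      change 2 * dg m j + 3 = _
      ring
  have e1 : X p * (X p * X q * w ^ 2) = X q * (X p * w) ^ 2 := by ring
  have e2 : X q * (X p * X q * w ^ 2) = X p * (X q * w) ^ 2 := by ring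
  have e3 : X a * (X p * X q * w ^ 2) = cc b * w ^ 2 := by rw [cc_three h]; ring
  have e4 : X b * (X p * X q * w ^ 2) = cc a * w ^ 2 := by rw [cc_three h2]; ring
  rw [e1, e2, e3, e4, low, low, add_zero, add_zero] at hr
  exact eq_of_add hr

theorem perm_lem {bb m j} {w : P4} (hw : w.IsHomogeneous (dg m j)) {L L' : List (Fin 4)}
    (h : L.Perm L') : ∀ N, N = j + L.length → cl bb m N (mo L w) = cl bb m N (mo L' w) := by
  induction h with
  | nil => intro N _; rfl
  | cons x h ih =>
    intro N hN
    rename_i l1 l2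
    subst hN
    exact cl_step (k := j + l1.length) x (ih _ rfl)
  | swap x y l =>
    intro N hN
    by_cases hxy : x = y
    · rw [hxy]
    · have := relW (bb := bb) (mo_homog l w hw) (Ne.symm hxy) 0 (N := N) (by
        rw [hN]; simp; omega)
      exact this
  | trans h1 h2 ih1 ih2 =>
    intro N hN
    rw [ih1 N hN, ih2 N (by rw [hN, h1.length_eq])]

theorem lemC {bb m j} {w : P4} (hw : w.IsHomogeneous (dg m j)) {L : List (Fin 4)} {x a : Fin 4}
    (hx : x ∈ L) (ha : a ∈ L) (N) (hN : N = j + (L.length + 1)) :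
    cl bb m N (mo (x :: L) w) = cl bb m N (mo (a :: L) w) := by
  by_cases hxa : x = a
  · rw [hxa]
  have h1 : L.Perm (x :: L.erase x) := List.perm_cons_erase hx
  have h2 : (L.erase x).Perm (a :: (L.erase x).erase a) :=
    List.perm_cons_erase ((List.mem_erase_of_ne (Ne.symm hxa)).2 ha)
  obtain ⟨R, hR⟩ : ∃ R, R = (L.erase x).erase a := ⟨_, rfl⟩
  rw [← hR] at h2
  have h3 : L.Perm (x :: a :: R) := h1.trans (h2.cons x)
  have hl := h3.length_eq
  simp only [List.length_cons] at hl
  rw [perm_lem hw (h3.cons x) N hN, perm_lem hw (h3.cons a) N hN]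
  have hp : (a :: x :: a :: R).Perm (a :: a :: x :: R) := (List.Perm.swap a x R).cons a
  rw [perm_lem hw hp N (by rw [hN, hl]; rfl)]
  have h5 : (x :: x :: a :: R) = List.replicate 2 x ++ (a :: R) := rfl
  have := relW (bb := bb) (mo_homog R w hw) hxa 1 (N := N) (by omega)
  exact this

theorem set_lem {bb m j} {w : P4} (hw : w.IsHomogeneous (dg m j)) : ∀ (n : ℕ) (L L' : List (Fin 4)),
    L.length = n → L'.length = n → (∀ x, x ∈ L ↔ x ∈ L') → ∀ N, N = j + n →
    cl bb m N (mo L w) = cl bb m N (mo L' w) := by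
  intro n
  induction n with
  | zero =>
    intro L L' h1 h2 _ N hN
    rw [List.length_eq_zero_iff.1 h1, List.length_eq_zero_iff.1 h2]
  | succ n ih =>
    intro L L' h1 h2 hs N hN
    by_cases hd : L.Nodup
    · have hsub : L.Perm L' := by
        have : L.Subperm L' := List.subperm_of_subset hd (fun x hx => (hs x).1 hx)
        exact this.perm_of_length_le (by omega)
      exact perm_lem hw hsub N (by omega)
    · have hd2 : ¬ L'.Nodup := by
        intro hd2
        have : L'.Subperm L := List.subperm_of_subset hd2 (fun x hx => (hs x).2 hx)
        exact hd ((this.perm_of_length_le (by omega)).nodup_iff.1 hd2)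
      have ex : ∀ L : List (Fin 4), ¬ L.Nodup → ∃ x L1, L.Perm (x :: L1) ∧ x ∈ L1 := by
        intro L hL
        rw [List.nodup_iff_count_le_one] at hL
        push Not at hL
        obtain ⟨x, hx⟩ := hL
        refine ⟨x, L.erase x, List.perm_cons_erase (List.count_pos_iff.1 (by omega)), ?_⟩
        apply List.count_pos_iff.1
        rw [List.count_erase_self]; omega
      obtain ⟨x, L1, hp1, hx⟩ := ex L hd
      obtain ⟨y, L2, hp2, hy⟩ := ex L' hd2
      have l1 := hp1.length_eq
      have l2 := hp2.length_eq
      simp only [List.length_cons] at l1 l2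
      have hs1 : ∀ z, z ∈ L1 ↔ z ∈ L2 := by
        intro z
        have a1 := hp1.mem_iff (a := z)
        have a2 := hp2.mem_iff (a := z)
        have a3 := hs z
        rw [List.mem_cons] at a1 a2
        constructor
        · intro hz
          rcases a2.1 (a3.1 (a1.2 (Or.inr hz))) with rfl | h
          · exact hy
          · exact h
        · intro hz
          rcases a1.1 (a3.2 (a2.2 (Or.inr hz))) with rfl | h
          · exact hx
          · exact h
      rw [perm_lem hw hp1 N (by omega), perm_lem hw hp2 N (by omega),
        lemC hw hx ((hs1 y).2 hy) N (by omega)]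
      have := ih L1 L2 (by omega) (by omega) hs1 (j + n) rfl
      rw [hN]
      exact cl_step (k := j + n) y this

end S13

namespace S13

abbrev Mat := Matrix (Fin 4) (Fin 4) kk

theorem substM_homog (M : Mat) {F : P4} {r : ℕ} (h : F.IsHomogeneous r) :
    (substM M F).IsHomogeneous r := by
  have := h.aeval (fun i => ∑ j, M i j • (X j : P4)) (n := 1) (by
    intro i
    apply IsHomogeneous.sum
    intro j _
    rw [smul_eq_C_mul]
    have := (isHomogeneous_C (Fin 4) (M i j)).mul (isHomogeneous_X kk j)
    simpa using this)
  rw [one_mul] at this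
  exact this

theorem substM_mul (M N : Mat) (f : P4) : substM N (substM M f) = substM (M * N) f := by
  have : (substM N).comp (substM M) = substM (M * N) := by
    apply MvPolynomial.algHom_ext
    intro i
    simp only [substM, AlgHom.comp_apply, aeval_X, map_sum, map_smul, Matrix.mul_apply,
      Finset.smul_sum, Finset.sum_smul, smul_smul]
    exact Finset.sum_comm
  rw [← this]; rfl

theorem substM_one (f : P4) : substM 1 f = f := by
  have : substM 1 = AlgHom.id kk P4 := by
    apply MvPolynomial.algHom_ext
    intro i
    simp [substM, Matrix.one_apply]
  rw [this]; rfl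

def sp (b0 : Fin 4 →₀ ℕ) : ℕ → (Fin 4 →₀ ℕ)
  | 0 => b0
  | k + 1 => ee 0 + 2 • sp b0 k

def uu (M : Mat) (i : Fin 4) : kk := coeff (ee 0) (substM M (cc i))

def sf (b0 : Fin 4 →₀ ℕ) (k : ℕ) (M : Mat) (F : P4) : kk := coeff (sp b0 k) (substM M F)

theorem sf_add (b0 k M F G) : sf b0 k M (F + G) = sf b0 k M F + sf b0 k M G := by
  simp [sf]
theorem sf_sub (b0 k M F G) : sf b0 k M (F - G) = sf b0 k M F - sf b0 k M G := by
  simp [sf]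
theorem sf_smul (b0 k M) (c : kk) (F) : sf b0 k M (c • F) = c * sf b0 k M F := by
  simp [sf]
theorem sf_zero (b0 k M) : sf b0 k M 0 = 0 := by
  simp [sf]
theorem sf_subst (b0 k M N F) : sf b0 k N (substM M F) = sf b0 k (M * N) F := by
  rw [sf, substM_mul, sf]

theorem sf_step (b0 k M i g) : sf b0 (k + 1) M (cc i * g ^ 2) = uu M i * sf b0 k M g := by
  rw [sf, map_mul, map_pow, sp, coefCore _ _ _ _ 3 (substM_homog M (cc_homog i)) _ (by rw [sum_ee])]
  · rfl
  · intro i; rw [ee_apply]; split_ifs <;> omega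

theorem sf_low (b0 k M) (d : Fin 4 →₀ ℕ) (h : wv d 0 < 3) : sf b0 (k + 1) M (monomial d 1) = 0 := by
  rw [sf, monomial_split, map_mul, map_pow, sp]
  have h1 : (monomial (par d) (1 : kk)).IsHomogeneous (wv d 0) := by
    apply isHomogeneous_monomial
    rw [deg_eq, wv_zero]; rfl
  apply coefCore_zero _ _ _ _ _ (substM_homog M h1)
  · intro i; rw [ee_apply]; split_ifs <;> omega
  · rw [sum_ee]; exact h

theorem sf_mo (b0 k M) (L : List (Fin 4)) (g) (N) (hN : N = k + L.length) :
    sf b0 N M (mo L g) = (L.map (uu M)).prod * sf b0 k M g := by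
  subst hN
  induction L with
  | nil => simp [mo]
  | cons i L ih =>
    rw [List.map_cons, List.prod_cons, mul_assoc, ← ih]
    exact sf_step _ _ _ _ _

/-- admissible base data -/
structure Good (b : ℕ → ℕ) (m : ℕ) (b0 : Fin 4 →₀ ℕ) : Prop where
  base : ∀ d : Fin 4 →₀ ℕ, ∑ i, d i = m → ¬ wLt (wv d) b
  zero : b0 0 = 0
  spike : ∀ i, ∃ t, b0 i + 1 = 2 ^ t

theorem sf_PwLt_mono {b m b0} (hg : Good b m b0) (M) (k : ℕ) : ∀ d : Fin 4 →₀ ℕ,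
    ∑ i, d i = dg m k → wLt (wv d) (w3 b k) → sf b0 k M (monomial d 1) = 0 := by
  induction k with
  | zero => intro d h1 h2; exact absurd h2 (hg.base d h1)
  | succ k ih =>
    intro d h1 h2
    rcases (wLt_w3_iff _ _ _).1 h2 with h | ⟨h, h3⟩
    · exact sf_low _ _ _ _ h
    · obtain ⟨i, hi⟩ := exists_step d h
      have h4 : ∑ i, half d i = dg m k := by
        have h5 := sum_step i (half d)
        rw [← hi, h1] at h5
        change 2 * dg m k + 3 = _ at h5
        omega
      rw [hi, ← mono_step, sf_step, ih _ h4 h3, mul_zero]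

theorem sf_PwLt {b m b0} (hg : Good b m b0) (M) (k : ℕ) {f : P4}
    (hf : f ∈ PwLt (dg m k) (w3 b k)) : sf b0 k M f = 0 := by
  refine span_induction2 (C := fun f => sf b0 k M f = 0) (sf_zero _ _ _) ?_ ?_ hf
  · intro x y hx hy; rw [sf_add, hx, hy, add_zero]
  · rintro _ ⟨d, h1, h2, rfl⟩
    exact sf_PwLt_mono hg M k d h1 h2

theorem lucas (t : ℕ) : ∀ a m : ℕ, a + m + 1 = 2 ^ t → ((a.choose m : ℕ) : kk) ≠ 0 → m = 0 := by
  induction t with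
  | zero => intro a m h _; simp at h; omega
  | succ t ih =>
    intro a m h hc
    have hl := Choose.choose_modEq_choose_mod_mul_choose_div_nat (p := 2) (n := a) (k := m)
    have hl2 := (ZMod.natCast_eq_natCast_iff _ _ 2).2 hl
    change ((a.choose m : ℕ) : kk) = _ at hl2
    rw [hl2] at hc
    rw [pow_succ] at h
    have hpar : a % 2 = 1 ∧ m % 2 = 0 := by
      rcases Nat.mod_two_eq_zero_or_one a with h1 | h1
      · have h2 : m % 2 = 1 := by omega
        rw [h1, h2] at hc
        simp at hc
      · exact ⟨h1, by omega⟩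
    rw [hpar.1, hpar.2] at hc
    simp at hc
    have := ih (a / 2) (m / 2) (by omega) hc
    omega

theorem sq_spike (σ α : Fin 4 →₀ ℕ) (hσ : ∀ i, ∃ t, σ i + 1 = 2 ^ t)
    (h : coeff σ (sqTotal (monomial α 1)) ≠ 0) : α = σ := by
  classical
  have e1 : sqTotal (monomial α 1) = ∏ i, ∑ m ∈ Finset.range (α i + 1),
      monomial (Finsupp.single i (α i + m)) (((α i).choose m : ℕ) : kk) := by
    rw [monomial_eq, Finsupp.prod_fintype _ _ (by simp)]
    simp only [C_1, one_mul, map_prod, map_pow]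
    apply Finset.prod_congr rfl
    intro i _
    have : sqTotal (X i) = X i ^ 2 + X i := by rw [sq_X]; ring
    rw [this, add_pow]
    apply Finset.sum_congr rfl
    intro m hm
    rw [Finset.mem_range] at hm
    have e2 : (X i ^ 2 : P4) ^ m * X i ^ (α i - m) = X i ^ (α i + m) := by
      rw [← pow_mul, ← pow_add]; congr 1; omega
    rw [e2, ← C_mul_X_pow_eq_monomial, mul_comm]
    simp
  rw [e1, Finset.prod_univ_sum, coeff_sum] at h
  obtain ⟨p, _, hp⟩ := Finset.exists_ne_zero_of_sum_ne_zero h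
  rw [← monomial_sum_prod, coeff_monomial] at hp
  split_ifs at hp with hs
  · have hs' : ∀ i, α i + p i = σ i := by
      intro i
      have := DFunLike.congr_fun hs i
      rw [Finsupp.finsetSum_apply] at this
      simpa [Finsupp.single_apply, Finset.sum_add_distrib] using this
    ext i
    obtain ⟨t, ht⟩ := hσ i
    have h1 := Finset.prod_ne_zero_iff.1 hp i (Finset.mem_univ _)
    have h2 := hs' i
    have := lucas t (α i) (p i) (by omega) h1
    omega
  · exact absurd rfl hp

theorem sp_spike {b m b0} (hg : Good b m b0) (k : ℕ) :
    sp b0 k 0 = 0 ∧ ∀ i, ∃ t, sp b0 k i + 1 = 2 ^ t := by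
  induction k with
  | zero => exact ⟨hg.zero, hg.spike⟩
  | succ k ih =>
    have h0 : sp b0 (k+1) 0 = 0 := by simp [sp, ih.1]
    refine ⟨h0, fun i => ?_⟩
    by_cases hi : i = 0
    · subst hi; exact ⟨0, by rw [h0]; rfl⟩
    · obtain ⟨t, ht⟩ := ih.2 i
      refine ⟨t + 1, ?_⟩
      simp [sp, hi, pow_succ]; omega

theorem hit_spike {σ : Fin 4 →₀ ℕ} (hσ : ∀ i, ∃ t, σ i + 1 = 2 ^ t) {n : ℕ} {f : P4}
    (hf : f ∈ hitSub n) : coeff σ f = 0 := by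
  refine span_induction2 (C := fun f => coeff σ f = 0) (coeff_zero _) ?_ ?_ hf
  · intro x y hx hy; rw [coeff_add, hx, hy, add_zero]
  · rintro _ ⟨d, hd, g, hg, rfl⟩
    rw [coeff_homogeneousComponent]
    split_ifs with hn
    · have hg' : g.IsHomogeneous d := (mem_homogeneousSubmodule _ _).1 hg
      refine homog_induction (C := fun g => coeff σ (sqTotal g) = 0) ?_ ?_ ?_ hg'
      · simp
      · intro a b ha hb; rw [map_add, coeff_add, ha, hb, add_zero]
      · intro α hα
        by_contra hc
        have := sq_spike σ α hσ hc
        subst this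
        rw [deg_eq] at hn
        omega
    · rfl

theorem sf_DD {b m b0} (hg : Good b m b0) {k : ℕ} {f : P4} (hf : f ∈ DD b m k) :
    sf b0 k 1 f = 0 := by
  obtain ⟨x, hx, y, hy, rfl⟩ := Submodule.mem_sup.1 hf
  rw [sf_add, sf_PwLt hg 1 k hy, add_zero, sf, substM_one]
  exact hit_spike (sp_spike hg k).2 hx

/-- minors -/
def per3 (x y z : Fin 4 → kk) : kk :=
  x 1 * (y 2 * z 3 + y 3 * z 2) + x 2 * (y 1 * z 3 + y 3 * z 1) + x 3 * (y 1 * z 2 + y 2 * z 1)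

theorem coeff_three (j k l : Fin 4) :
    coeff (ee 0) (X j * (X k * X l) : P4) = if [0, j, k, l].Nodup then 1 else 0 := by
  classical
  have h1 : (X j * (X k * X l) : P4) =
      monomial (Finsupp.single j 1 + (Finsupp.single k 1 + Finsupp.single l 1)) 1 := by
    simp only [X, monomial_mul, one_mul]
  rw [h1, coeff_monomial]
  clear h1
  have : (Finsupp.single j 1 + (Finsupp.single k 1 + Finsupp.single l 1) = ee 0) ↔
      [0, j, k, l].Nodup := by
    rw [Finsupp.ext_iff]
    simp only [Finsupp.add_apply, Finsupp.single_apply, ee_apply]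
    revert j k l; decide
  simp only [this]

theorem uu_eq (M : Mat) {a b p q : Fin 4} (h : [a, b, p, q].Nodup) :
    uu M b = per3 (M a) (M p) (M q) := by
  rw [uu, cc_three h]
  simp only [map_mul, substM, aeval_X]
  have : (∑ j, M a j • (X j : P4)) * ((∑ k, M p k • (X k : P4)) * (∑ l, M q l • (X l : P4)))
      = ∑ j, ∑ k, ∑ l, (M a j * (M p k * M q l)) • (X j * (X k * X l)) := by
    rw [Finset.sum_mul]
    apply Finset.sum_congr rfl
    intro j _
    rw [Finset.sum_mul_sum, Finset.mul_sum]
    apply Finset.sum_congr rfl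
    intro k _
    rw [Finset.mul_sum]
    simp only [smul_mul_smul_comm]
  rw [this]
  simp only [coeff_sum, coeff_smul, coeff_three, smul_eq_mul]
  simp only [Fin.sum_univ_four, per3]
  simp
  ring

theorem det_uu (M : Mat) : M.det = ∑ i, M i 0 * uu M i := by
  rw [Fin.sum_univ_four, uu_eq M (show [1,0,2,3].Nodup by decide),
    uu_eq M (show [0,1,2,3].Nodup by decide), uu_eq M (show [0,2,1,3].Nodup by decide),
    uu_eq M (show [0,3,1,2].Nodup by decide)]
  simp [Matrix.det_succ_row_zero, Fin.sum_univ_succ, per3, Fin.succAbove, CharTwo.neg_eq]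
  ring

end S13

namespace S13

theorem kk_ne {x : kk} (h : x ≠ 0) : x = 1 := (kk_cases x).resolve_left h
theorem kk_idem (x : kk) : x * x = x := by revert x; decide

theorem uu_ne {M : Mat} (h : IsUnit M) : uu M ≠ 0 := by
  intro h0
  have h1 : M.det ≠ 0 := (Matrix.isUnit_iff_isUnit_det M).1 h |>.ne_zero
  apply h1
  rw [det_uu, h0]; simp

theorem ex_mat (u v : Fin 4 → kk) (hu : u ≠ 0) (hv : v ≠ 0) (huv : ∑ i, u i * v i = 0) :
    ∃ M : Mat, IsUnit M ∧ uu M = u ∧ ∀ j, M j 3 = v j := by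
  obtain ⟨i0, hi0⟩ := Function.ne_iff.1 hu
  have hi1 : u i0 = 1 := kk_ne hi0
  have : ∃ j0, j0 ≠ i0 ∧ v j0 = 1 := by
    by_contra hc
    push Not at hc
    have hz : ∀ j, j ≠ i0 → v j = 0 := fun j hj => by
      rcases kk_cases (v j) with h | h
      · exact h
      · exact absurd h (hc j hj)
    obtain ⟨j, hj⟩ := Function.ne_iff.1 hv
    rw [Finset.sum_eq_single i0 (fun j _ hj => by rw [hz j hj, mul_zero]) (by simp), hi1,
      one_mul] at huv
    by_cases hji : j = i0
    · rw [hji] at hj; exact hj huv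
    · exact hj (hz j hji)
  obtain ⟨j0, hj0, hvj⟩ := this
  obtain ⟨k, l, hn⟩ := ex_pq hj0
  obtain ⟨M, hM⟩ : ∃ M : Mat, M = fun r => if r = i0 then ![1, u k, u l, v i0] else if r = j0 then
    ![0, 0, 0, 1] else if r = k then ![0, 1, 0, v k] else ![0, 0, 1, v l] := ⟨_, rfl⟩
  have hn' := hn
  simp only [List.nodup_cons, List.mem_cons, List.not_mem_nil, or_false, not_or,
    List.nodup_nil, not_false_eq_true, and_true] at hn'
  obtain ⟨⟨h1, h2, h3⟩, ⟨h4, h5⟩, h6⟩ := hn'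
  have r1 : M i0 = ![1, u k, u l, v i0] := by rw [hM]; simp
  have r2 : M j0 = ![0, 0, 0, 1] := by rw [hM]; simp [h1]
  have r3 : M k = ![0, 1, 0, v k] := by rw [hM]; simp [Ne.symm h2, Ne.symm h4]
  have r4 : M l = ![0, 0, 1, v l] := by rw [hM]; simp [Ne.symm h3, Ne.symm h5, Ne.symm h6]
  have cov : ∀ r, r = j0 ∨ r = i0 ∨ r = k ∨ r = l := by
    intro r
    clear hM r1 r2 r3 r4 h1 h2 h3 h4 h5 h6 hvj hj0 hi1 hi0 huv hu hv
    revert j0 i0 k l r; decide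
  have huM : uu M = u := by
    funext r
    rcases cov r with rfl | rfl | rfl | rfl
    · rw [uu_eq M (show [i0, r, k, l].Nodup by
        clear * - hn; revert r i0 k l; decide), r1, r3, r4]
      rw [sum4 _ hn, hvj, hi1] at huv
      simp [per3]
      have h7 := eq_of_add (V := kk) (x := u r) (y := v i0 + u k * v k + u l * v l) (by
        rw [← huv]; ring)
      rw [h7]; ring
    · rw [uu_eq M hn, r2, r3, r4]
      simp [per3, hi1]
    · rw [uu_eq M (show [j0, r, i0, l].Nodup by
        clear * - hn; revert j0 i0 r l; decide), r2, r1, r4]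
      simp [per3]
    · rw [uu_eq M (show [j0, r, i0, k].Nodup by
        clear * - hn; revert j0 i0 k r; decide), r2, r1, r3]
      simp [per3]
  refine ⟨M, ?_, huM, ?_⟩
  · rw [Matrix.isUnit_iff_isUnit_det, det_uu, huM, sum4 _ hn, r1, r2, r3, r4]
    simp [hi1]
  · intro r
    rcases cov r with rfl | rfl | rfl | rfl
    · rw [r2, hvj]; rfl
    · rw [r1]; rfl
    · rw [r3]; rfl
    · rw [r4]; rfl

theorem ex_mat_u (u : Fin 4 → kk) (hu : u ≠ 0) : ∃ M : Mat, IsUnit M ∧ uu M = u := by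
  have : ∃ v : Fin 4 → kk, v ≠ 0 ∧ ∑ i, u i * v i = 0 := by
    by_cases h0 : u 0 = 0
    · exact ⟨![1, 0, 0, 0], by decide, by simp [Fin.sum_univ_four, h0]⟩
    by_cases h1 : u 1 = 0
    · exact ⟨![0, 1, 0, 0], by decide, by simp [Fin.sum_univ_four, h1]⟩
    · refine ⟨![1, 1, 0, 0], by decide, ?_⟩
      simp [Fin.sum_univ_four, kk_ne h0, kk_ne h1]; decide
  obtain ⟨v, hv, huv⟩ := this
  obtain ⟨M, h1, h2, _⟩ := ex_mat u v hu hv huv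
  exact ⟨M, h1, h2⟩

theorem prod_set (u : Fin 4 → kk) (L : List (Fin 4)) : (L.map u).prod = ∏ i ∈ L.toFinset, u i := by
  induction L with
  | nil => simp
  | cons a L ih =>
    rw [List.map_cons, List.prod_cons, ih, List.toFinset_cons]
    by_cases h : a ∈ L.toFinset
    · rw [Finset.insert_eq_self.2 h, ← Finset.mul_prod_erase _ _ h, ← mul_assoc, kk_idem]
    · rw [Finset.prod_insert h]

/-- a list of length `N` with underlying set `I` -/
def repl (N : ℕ) (I : Finset (Fin 4)) : List (Fin 4) :=
  I.toList ++ List.replicate (N - I.card) (I.toList.headD 0)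

theorem repl_length {N : ℕ} {I : Finset (Fin 4)} (h : I.card ≤ N) : (repl N I).length = N := by
  simp [repl]; omega

theorem repl_mem {N : ℕ} {I : Finset (Fin 4)} (h : I.Nonempty) (x) : x ∈ repl N I ↔ x ∈ I := by
  have h1 : I.toList.headD 0 ∈ I := by
    rw [← Finset.mem_toList]
    cases hL : I.toList with
    | nil => rw [Finset.toList_eq_nil] at hL; rw [hL] at h; simp at h
    | cons a L => simp
  simp only [repl, List.mem_append, Finset.mem_toList, List.mem_replicate]
  constructor
  · rintro (h | ⟨_, rfl⟩)
    · exact h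
    · exact h1
  · exact Or.inl

theorem repl_toFinset {N : ℕ} {I : Finset (Fin 4)} (h : I.Nonempty) : (repl N I).toFinset = I := by
  ext x; rw [List.mem_toFinset, repl_mem h]

theorem repl_lem {bb m j N w} (hw : IsHomogeneous w (dg m j)) (L : List (Fin 4)) (n : ℕ)
    (h : L.length = n)
    (hn : L ≠ []) (hN : N = j + n) :
    cl bb m N (mo L w) = cl bb m N (mo (repl n L.toFinset) w) := by
  have hne : L.toFinset.Nonempty := by
    rwa [List.toFinset_nonempty_iff]
  refine set_lem hw n _ _ h (repl_length ?_) ?_ N hN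
  · rw [← h]; exact List.toFinset_card_le L
  · intro x; rw [repl_mem hne, List.mem_toFinset]

theorem wLe_step (d b k) (h : wv d 0 = 3) :
    wLe (wv d) (w3 b (k+1)) ↔ wLe (wv (half d)) (w3 b k) := by
  rw [wLe, wLe, wLt_w3_iff]
  have : (wv d = w3 b (k+1)) ↔ wv (half d) = w3 b k := by
    constructor
    · intro e; funext j
      rw [← wv_succ, e]; rfl
    · intro e; funext j
      cases j with
      | zero => exact h
      | succ j => rw [wv_succ, e]; rfl
  rw [this]
  constructor
  · rintro (h1 | h1 | h1)
    · exact Or.inl h1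
    · omega
    · exact Or.inr h1.2
  · rintro (h1 | h1)
    · exact Or.inl h1
    · exact Or.inr (Or.inr ⟨h, h1⟩)

theorem dg_odd (m k) : dg m (k + 1) % 2 = 1 := by
  change (2 * dg m k + 3) % 2 = 1; omega

theorem wv_par (d : Fin 4 →₀ ℕ) : wv d 0 % 2 = (∑ i, d i) % 2 := by
  rw [wv_zero, Fin.sum_univ_four, Fin.sum_univ_four]; omega

theorem wv_le (d : Fin 4 →₀ ℕ) : wv d 0 ≤ 4 := by
  rw [wv_zero, Fin.sum_univ_four]; omega

theorem decomp (b m) (N : ℕ) : ∀ d : Fin 4 →₀ ℕ, ∑ i, d i = dg m N → wLt (wv d) (w3 b N) ∨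
    ∃ L d', L.length = N ∧ ∑ i, d' i = m ∧ monomial d (1 : kk) = mo L (monomial d' 1) ∧
      (wLe (wv d) (w3 b N) ↔ wLe (wv d') b) := by
  induction N with
  | zero => intro d hd; exact Or.inr ⟨[], d, rfl, hd, rfl, Iff.rfl⟩
  | succ N ih =>
    intro d hd
    have h1 := wv_par d
    rw [hd, dg_odd] at h1
    have h2 := wv_le d
    by_cases h : wv d 0 < 3
    · left; rw [wLt_w3_iff]; exact Or.inl h
    have h3 : wv d 0 = 3 := by omega
    obtain ⟨i, hi⟩ := exists_step d h3
    have h4 : ∑ i, half d i = dg m N := by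
      have h5 := sum_step i (half d)
      rw [← hi, hd] at h5
      change 2 * dg m N + 3 = _ at h5
      omega
    rcases ih _ h4 with h5 | ⟨L, d', a1, a2, a3, a4⟩
    · left; rw [wLt_w3_iff]; exact Or.inr ⟨h3, h5⟩
    · right
      refine ⟨i :: L, d', by simp [a1], a2, ?_, ?_⟩
      · rw [mo, ← a3, mono_step, ← hi]
      · rw [wLe_step _ _ _ h3, a4]

theorem prod_ind (I J : Finset (Fin 4)) :
    ∏ i ∈ I, (if i ∈ J then (1 : kk) else 0) = if I ⊆ J then 1 else 0 := by
  rw [Finset.prod_ite_zero]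
  simp [Finset.subset_iff]

def b00 : ℕ → ℕ := fun _ => 0

theorem good0 : Good b00 0 0 := by
  refine ⟨?_, rfl, fun i => ⟨0, rfl⟩⟩
  rintro d _ ⟨j, _, h⟩
  exact absurd h (by simp [b00])

theorem ii_key (N : ℕ) (hN : 4 ≤ N) {f : P4} (hf : f.IsHomogeneous (dg 0 N))
    (h0 : ∀ M, IsUnit M → sf 0 N M f = 0) : f ∈ DD b00 0 N := by
  have key : ∃ a : Finset (Fin 4) → kk, a ∅ = 0 ∧
      cl b00 0 N f = ∑ I, a I • cl b00 0 N (mo (repl N I) 1) ∧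
      ∀ M, sf 0 N M f = ∑ I, a I * ∏ i ∈ I, uu M i := by
    refine homog_induction (C := fun f => ∃ a : Finset (Fin 4) → kk, a ∅ = 0 ∧
      cl b00 0 N f = ∑ I, a I • cl b00 0 N (mo (repl N I) 1) ∧
      ∀ M, sf 0 N M f = ∑ I, a I * ∏ i ∈ I, uu M i) ?_ ?_ ?_ hf
    · exact ⟨0, rfl, by simp, by simp [sf_zero]⟩
    · rintro x y ⟨a, a0, a1, a2⟩ ⟨b, b0, b1, b2⟩
      refine ⟨a + b, by simp [a0, b0], ?_, ?_⟩
      · simp [add_smul, Finset.sum_add_distrib, a1, b1]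
      · intro M
        simp [add_mul, Finset.sum_add_distrib, sf_add, a2, b2]
    · intro d hd
      rcases decomp b00 0 N d hd with h | ⟨L, d', h1, h2, h3, _⟩
      · refine ⟨0, rfl, ?_, ?_⟩
        · simp only [Pi.zero_apply, zero_smul, Finset.sum_const_zero]
          rw [cl_zero_iff]
          exact Submodule.mem_sup_right (Submodule.subset_span ⟨d, hd, h, rfl⟩)
        · intro M
          rw [sf_PwLt_mono good0 M N d hd h]; simp
      · have hd' : d' = 0 := by
          ext i
          exact Finset.sum_eq_zero_iff.1 h2 i (Finset.mem_univ _)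
        have e1 : monomial d' (1 : kk) = 1 := by rw [hd']; rfl
        rw [e1] at h3
        rw [h3]
        have hL : L ≠ [] := by rintro rfl; simp at h1; omega
        have hw : (1 : P4).IsHomogeneous (dg 0 0) := isHomogeneous_one _ _
        refine ⟨fun I => if I = L.toFinset then 1 else 0, ?_, ?_, ?_⟩
        · exact if_neg (fun h => hL (List.toFinset_eq_empty_iff _ |>.1 h.symm))
        · rw [repl_lem hw L N h1 hL (by omega)]
          simp
        · intro M
          rw [sf_mo 0 0 M L 1 N (by omega), prod_set]
          simp [sf, sp]
  obtain ⟨a, a0, a1, a2⟩ := key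
  have a3 : ∀ I, a I = 0 := by
    intro I
    induction I using Finset.strongInduction with
    | H I ih =>
      by_cases hI : I = ∅
      · rw [hI, a0]
      obtain ⟨M, hM, hu⟩ := ex_mat_u (fun i => if i ∈ I then 1 else 0) (by
        obtain ⟨x, hx⟩ := Finset.nonempty_iff_ne_empty.2 hI
        intro h
        have := congrFun h x
        simp [hx] at this)
      have h1 := h0 M hM
      rw [a2, hu] at h1
      simp only [prod_ind] at h1
      rw [Finset.sum_eq_single I] at h1
      · simpa using h1
      · intro J _ hJ
        by_cases hs : J ⊆ I
        · rw [ih J (Finset.ssubset_iff_subset_ne.2 ⟨hs, hJ⟩), zero_mul]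
        · rw [if_neg hs, mul_zero]
      · simp
  rw [← cl_zero_iff, a1]
  simp [a3]

theorem mo_rep (k : ℕ) (i : Fin 4) : mo (List.replicate k i) 1 = cc i ^ (2 ^ k - 1) := by
  induction k with
  | zero => simp [mo]
  | succ k ih =>
    rw [List.replicate_succ, mo, ih, ← pow_mul, ← pow_succ']
    congr 1
    have := Nat.one_le_two_pow (n := k)
    rw [pow_succ]; omega

def zetaL (r : ℕ) : List (List (Fin 4)) :=
  [List.replicate (r+3) 0, List.replicate (r+3) 1, List.replicate (r+3) 2, List.replicate (r+3) 3,
   1 :: List.replicate (r+2) 0, 2 :: List.replicate (r+2) 0, 3 :: List.replicate (r+2) 0,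
   2 :: List.replicate (r+2) 1, 3 :: List.replicate (r+2) 1, 3 :: List.replicate (r+2) 2,
   2 :: 1 :: List.replicate (r+1) 0, 3 :: 1 :: List.replicate (r+1) 0,
   3 :: 2 :: List.replicate (r+1) 0, 3 :: 2 :: List.replicate (r+1) 1,
   3 :: 2 :: 1 :: List.replicate r 0]

theorem zeta_eq (r : ℕ) : zetaStar (2 ^ (r + 3)) = ((zetaL r).map (fun L => mo L 1)).sum := by
  obtain ⟨t, ht⟩ : ∃ t, 2 ^ r = t + 1 := ⟨2 ^ r - 1, by have := Nat.one_le_two_pow (n := r); omega⟩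
  have e0 : 2 ^ (r + 3) = 8 * t + 8 := by rw [pow_add, ht]; ring
  have e1 : 2 ^ (r + 2) = 4 * t + 4 := by rw [pow_add, ht]; ring
  have e2 : 2 ^ (r + 1) = 2 * t + 2 := by rw [pow_add, ht]; ring
  have c0 := cc_three (show [1,0,2,3].Nodup by decide)
  have c1 := cc_three (show [0,1,2,3].Nodup by decide)
  have c2 := cc_three (show [0,2,1,3].Nodup by decide)
  have c3 := cc_three (show [0,3,1,2].Nodup by decide)
  simp only [zetaL, List.map_cons, List.map_nil, List.sum_cons, List.sum_nil, mo, mo_rep]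
  rw [e0, e1, e2, ht, zetaStar]
  have f1 : 8 * t + 8 - 1 = 8 * t + 7 := by omega
  have f2 : 8 * t + 8 - 2 = 8 * t + 6 := by omega
  have f3 : 8 * t + 8 - 3 = 8 * t + 5 := by omega
  have f5 : 8 * t + 8 - 5 = 8 * t + 3 := by omega
  have f6 : 4 * t + 4 - 1 = 4 * t + 3 := by omega
  have f7 : 2 * t + 2 - 1 = 2 * t + 1 := by omega
  have f8 : t + 1 - 1 = t := by omega
  rw [f1, f2, f3, f5, f6, f7, f8, c0, c1, c2, c3]
  ring

theorem zetaL_len {r L} (h : L ∈ zetaL r) : L.length = r + 3 := by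
  simp only [zetaL, List.mem_cons, List.not_mem_nil, or_false] at h
  rcases h with h | h | h | h | h | h | h | h | h | h | h | h | h | h | h <;> rw [h] <;> simp

theorem zeta_homog (r : ℕ) : (zetaStar (2 ^ (r + 3))).IsHomogeneous (dg 0 (r + 3)) := by
  rw [zeta_eq, ← mem_homogeneousSubmodule]
  apply list_sum_mem
  intro x hx
  obtain ⟨L, hL, rfl⟩ := List.mem_map.1 hx
  have := mo_homog (m := 0) (k := 0) L 1 (isHomogeneous_one _ _)
  rw [zetaL_len hL, zero_add] at this
  exact this

theorem sf_listsum (b0 k M) (l : List P4) : sf b0 k M l.sum = (l.map (sf b0 k M)).sum := by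
  induction l with
  | nil => simp [sf_zero]
  | cons a l ih => simp [sf_add, ih]

theorem zeta_sf (r : ℕ) (hr : 0 < r) (M : Mat) (hM : IsUnit M) :
    sf 0 (r + 3) M (zetaStar (2 ^ (r + 3))) = 1 := by
  have h1 : ((zetaL r).map (fun L => mo L 1)).map (sf 0 (r + 3) M) =
      (zetaL r).map (fun L => (L.map (uu M)).prod) := by
    rw [List.map_map]
    apply List.map_congr_left
    intro L hL
    rw [Function.comp, sf_mo 0 0 M L 1 (r + 3) (by rw [zetaL_len hL]; omega)]
    simp [sf, sp]
  rw [zeta_eq, sf_listsum, h1]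
  have hp : ∀ (x : kk) (k : ℕ), 0 < k → x ^ k = x := by
    intro x k hk
    rcases kk_cases x with rfl | rfl
    · rw [zero_pow (by omega)]
    · simp
  simp only [zetaL, List.map_cons, List.map_nil, List.sum_cons, List.sum_nil, List.prod_cons,
    List.map_replicate, List.prod_replicate]
  rw [hp _ (r+3) (by omega), hp _ (r+3) (by omega), hp _ (r+3) (by omega), hp _ (r+3) (by omega),
    hp _ (r+2) (by omega), hp _ (r+2) (by omega), hp _ (r+2) (by omega), hp _ (r+1) (by omega),
    hp _ (r+1) (by omega), hp _ r (by omega)]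
  have hne := uu_ne hM
  have hor : uu M 0 ≠ 0 ∨ uu M 1 ≠ 0 ∨ uu M 2 ≠ 0 ∨ uu M 3 ≠ 0 := by
    by_contra hc
    push Not at hc
    apply hne
    funext i
    fin_cases i
    · exact hc.1
    · exact hc.2.1
    · exact hc.2.2.1
    · exact hc.2.2.2
  generalize uu M 0 = a at *
  generalize uu M 1 = b at *
  generalize uu M 2 = c at *
  generalize uu M 3 = d at *
  clear hne h1 hp hM
  revert a b c d
  decide

end S13

namespace S13

def b11 : ℕ → ℕ := fun j => if j < 2 then 1 else 0

def xx (j k : Fin 4) : P4 := X j * X k ^ 2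

theorem xx_homog (j k) : (xx j k).IsHomogeneous (dg 3 0) := by
  have := (isHomogeneous_X kk j).mul ((isHomogeneous_X kk k).pow 2)
  exact this

def G0 (s : ℕ) (I : Finset (Fin 4)) (j k : Fin 4) : QD b11 3 s := cl b11 3 s (mo (repl s I) (xx j k))

theorem G0_eq {s : ℕ} {L : List (Fin 4)} {I} (j k) (h : L.length = s) (hn : L ≠ [])
    (hI : L.toFinset = I) : cl b11 3 s (mo L (xx j k)) = G0 s I j k := by
  subst hI
  exact repl_lem (xx_homog j k) L s h hn (by omega)

theorem xx_sym (j k) : cl b11 3 0 (xx j k) = cl b11 3 0 (xx k j) := by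
  apply eq_of_add
  rw [← map_add, cl_zero_iff]
  apply Submodule.mem_sup_left
  have h2 : (X j * X k : P4).IsHomogeneous 2 := (isHomogeneous_X kk j).mul (isHomogeneous_X kk k)
  have hS : (xx j k + xx k j).IsHomogeneous 3 := (xx_homog j k).add (xx_homog k j)
  have h4 : ((X j * X k : P4) ^ 2).IsHomogeneous 4 := h2.pow 2
  have h1 := hit_mem (n := 3) _ h2 (by omega)
  have e : sqTotal (X j * X k) = X j * X k + (xx j k + xx k j) + (X j * X k) ^ 2 := by
    rw [map_mul, sq_X, sq_X, xx, xx]; ring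
  rw [e, map_add, map_add, homogeneousComponent_eq_self hS,
    homogeneousComponent_of_mem ((mem_homogeneousSubmodule _ _).2 h2),
    homogeneousComponent_of_mem ((mem_homogeneousSubmodule _ _).2 h4), if_neg (by omega),
    if_neg (by omega), zero_add, add_zero] at h1
  exact h1

theorem cl_sym {s} (L : List (Fin 4)) (j k) (h : L.length = s) :
    cl b11 3 s (mo L (xx j k)) = cl b11 3 s (mo L (xx k j)) :=
  cl_mo L (xx_sym j k) (by omega)

theorem G0_sym {s} (hs : 3 ≤ s) {I : Finset (Fin 4)} (hI : I ≠ Finset.univ) (j k) :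
    G0 s I j k = G0 s I k j := by
  apply cl_sym
  apply repl_length
  have := Finset.card_lt_univ_of_notMem (s := I) (x := Classical.choose (by
    by_contra hc; push Not at hc; exact hI (Finset.eq_univ_iff_forall.2 hc) : ∃ x, x ∉ I))
    (Classical.choose_spec (_ : ∃ x, x ∉ I))
  simp at this
  omega

theorem R4 {s} (L : List (Fin 4)) (h : L.length + 1 = s) (k) :
    ∑ i, cl b11 3 s (mo (L ++ [i]) (xx i k)) = 0 := by
  have h1 := relT (b := b11) (m := 3) (j := 0) (X k ^ 2) 2 ((isHomogeneous_X kk k).pow 2) rfl 0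
  rw [← cl_zero_iff] at h1
  have h2 := cl_mo0 (N := s) L h1 (by omega)
  rw [mo_sum, map_sum] at h2
  rw [← h2]
  apply Finset.sum_congr rfl
  intro i _
  rw [mo_append]; rfl

theorem R4' {s} (hs : 3 ≤ s) (k) :
    ∑ i, cl b11 3 s (mo (List.replicate s i) (xx i k)) = 0 := by
  obtain ⟨t, rfl⟩ : ∃ t, s = t + 1 := ⟨s - 1, by omega⟩
  have h1 := relT (b := b11) (m := 3) (j := 0) (X k ^ 2) 2 ((isHomogeneous_X kk k).pow 2) rfl t
  rw [zero_add, ← cl_zero_iff, map_sum] at h1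
  exact h1

theorem toF_rep {s : ℕ} (hs : 0 < s) (i : Fin 4) : (List.replicate s i).toFinset = {i} := by
  ext x; simp; omega

theorem relG0 {s} (hs : 3 ≤ s) {I : Finset (Fin 4)} (hI : I.card ≤ 2) (k) :
    ∑ i, G0 s (insert i I) i k = 0 := by
  by_cases h0 : I = ∅
  · subst h0
    rw [← R4' hs k]
    apply Finset.sum_congr rfl
    intro i _
    refine (G0_eq _ _ (by simp) ?_ ?_).symm
    · intro h; have := congrArg List.length h; simp at this; omega
    · rw [toF_rep (by omega)]; rfl
  · have hne := Finset.nonempty_iff_ne_empty.2 h0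
    have hl : (repl (s - 1) I).length = s - 1 := repl_length (by omega)
    rw [← R4 (s := s) (repl (s - 1) I) (by omega) k]
    apply Finset.sum_congr rfl
    intro i _
    refine (G0_eq _ _ (by simp; omega) (by simp) ?_).symm
    rw [List.toFinset_append, repl_toFinset hne]
    ext x; simp

theorem fullG0 {s} (L : List (Fin 4)) (h : L.length = s) (hL : L.toFinset = Finset.univ)
    (j k) : cl b11 3 s (mo L (xx j k)) = ∑ i ∈ Finset.univ.erase j, G0 s (Finset.univ.erase j) i k := by
  have hc : 4 ≤ s := by
    have := List.toFinset_card_le L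
    rw [hL, h] at this
    simpa using this
  have hcard : (Finset.univ.erase j : Finset (Fin 4)).card = 3 := by
    rw [Finset.card_erase_of_mem (Finset.mem_univ _)]; rfl
  have hne : (Finset.univ.erase j : Finset (Fin 4)).Nonempty := by
    rw [← Finset.card_pos]; omega
  have hl : (repl (s - 1) (Finset.univ.erase j)).length = s - 1 := repl_length (by omega)
  have h1 := R4 (s := s) (repl (s - 1) (Finset.univ.erase j)) (by omega) k
  rw [← Finset.add_sum_erase _ _ (Finset.mem_univ j)] at h1
  have h2 := eq_of_add h1
  rw [set_lem (xx_homog j k) s L (repl (s - 1) (Finset.univ.erase j) ++ [j]) h (by simp; omega) ?_ s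
    (by omega), h2]
  · apply Finset.sum_congr rfl
    intro i hi
    refine G0_eq _ _ (by simp; omega) (by simp) ?_
    rw [List.toFinset_append, repl_toFinset hne]
    ext x
    rw [Finset.mem_union, List.mem_toFinset, List.mem_singleton]
    constructor
    · rintro (h | rfl)
      · exact h
      · exact hi
    · exact Or.inl
  · intro x
    rw [← List.mem_toFinset, hL, List.mem_append, repl_mem hne]
    simp
    exact ne_or_eq x j

theorem relA {s : ℕ} {a b p q : Fin 4} (hn : [a, b, p, q].Nodup) (L : List (Fin 4)) (t : ℕ)
    (hs : s = L.length + (t + 1)) :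
    cl b11 3 s (mo (L ++ List.replicate (t + 1) a) (cc b)) +
    cl b11 3 s (mo (L ++ List.replicate (t + 1) b) (cc a)) +
    cl b11 3 s (mo (L ++ List.replicate (t + 1) p) (xx q p)) +
    cl b11 3 s (mo (L ++ List.replicate (t + 1) q) (xx p q)) = 0 := by
  have h1 := relT (b := b11) (m := 3) (j := 0) (X p * X q) 2
    ((isHomogeneous_X kk p).mul (isHomogeneous_X kk q)) rfl t
  rw [← cl_zero_iff] at h1
  have h2 := cl_mo0 (N := s) L h1 (by omega)
  rw [mo_sum, map_sum, sum4 _ hn] at h2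
  simp only [mo_append]
  rw [cc_three hn, cc_three (nodup_ba hn), xx, xx]
  rw [show (X q * X p ^ 2 : P4) = X p * (X p * X q) by ring,
    show (X p * X q ^ 2 : P4) = X q * (X p * X q) by ring]
  exact h2

theorem relE {s : ℕ} (hs : 3 ≤ s) {a b p q : Fin 4} (hn : [a, b, p, q].Nodup) :
    G0 s {p} p q + G0 s {q} p q + G0 s {a, p} p q + G0 s {a, q} p q + G0 s {b, p} p q
     + G0 s {b, q} p q + G0 s {a, b, p} p q + G0 s {a, b, q} p q = 0 := by
  obtain ⟨t, rfl⟩ : ∃ t, s = t + 3 := ⟨s - 3, by omega⟩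
  have hB := relA (s := t + 3) hn [] (t + 2) (by simp)
  have hA1 := relA (s := t + 3) hn (List.replicate (t + 2) a) 0 (by simp)
  have hA2 := relA (s := t + 3) hn (List.replicate (t + 2) b) 0 (by simp)
  have hA3 := relA (s := t + 3) hn (b :: List.replicate (t + 1) a) 0 (by simp)
  have H : ∀ L L' : List (Fin 4), L.length = t + 3 → L'.length = t + 3 → (∀ x, x ∈ L ↔ x ∈ L') →
      ∀ i, cl b11 3 (t+3) (mo L (cc i)) = cl b11 3 (t+3) (mo L' (cc i)) :=
    fun L L' h1 h2 h3 i => set_lem (m := 3) (j := 0) (cc_homog i) (t+3) L L' h1 h2 h3 _ (by omega)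
  obtain ⟨La, hLa⟩ : ∃ L, L = List.replicate (t + 3) a := ⟨_, rfl⟩
  obtain ⟨Lb, hLb⟩ : ∃ L, L = List.replicate (t + 3) b := ⟨_, rfl⟩
  obtain ⟨Lab, hLab⟩ : ∃ L, L = b :: List.replicate (t + 2) a := ⟨_, rfl⟩
  simp only [List.nil_append] at hB
  rw [H (List.replicate (t+2) a ++ List.replicate (0+1) a) La (by simp) (by simp [hLa])
    (by intro x; simp [hLa]),
    H (List.replicate (t+2) a ++ List.replicate (0+1) b) Lab (by simp) (by simp [hLab])
    (by intro x; simp [hLab, or_comm])] at hA1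
  rw [H (List.replicate (t+2) b ++ List.replicate (0+1) b) Lb (by simp) (by simp [hLb])
    (by intro x; simp [hLb]),
    H (List.replicate (t+2) b ++ List.replicate (0+1) a) Lab (by simp) (by simp [hLab])
    (by intro x; simp [hLab])] at hA2
  rw [H (b :: List.replicate (t+1) a ++ List.replicate (0+1) a) Lab (by simp) (by simp [hLab])
    (by intro x; simp [hLab]),
    H (b :: List.replicate (t+1) a ++ List.replicate (0+1) b) Lab (by simp) (by simp [hLab])
    (by intro x; simp [hLab]; tauto)] at hA3
  change cl b11 3 (t+3) (mo (List.replicate (t + 3) a) _) +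
    cl b11 3 (t+3) (mo (List.replicate (t + 3) b) _) + _ + _ = 0 at hB
  rw [← hLa, ← hLb] at hB
  have K : ∀ (L : List (Fin 4)) (I : Finset (Fin 4)), L.length = t + 3 → L.toFinset = I →
      cl b11 3 (t+3) (mo L (xx p q)) = G0 (t+3) I p q := by
    intro L I h1 h2
    exact G0_eq _ _ h1 (by rintro rfl; simp at h1) h2
  rw [cl_sym _ q p (by simp)] at hB hA1 hA2 hA3
  rw [K _ {p} (by simp) (toF_rep (by omega) p), K _ {q} (by simp) (toF_rep (by omega) q)] at hB
  rw [K _ {a, p} (by simp) (by ext x; simp; tauto), K _ {a, q} (by simp) (by ext x; simp; tauto)] at hA1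
  rw [K _ {b, p} (by simp) (by ext x; simp; tauto), K _ {b, q} (by simp) (by ext x; simp; tauto)] at hA2
  rw [K _ {a, b, p} (by simp) (by ext x; simp; tauto),
    K _ {a, b, q} (by simp) (by ext x; simp; tauto)] at hA3
  linear_combination (norm := skip) (1 : kk) • hB + (1 : kk) • hA1 + (1 : kk) • hA2 + (1 : kk) • hA3
  match_scalars <;> decide

end S13

namespace S13

def XX (s : ℕ) (j k : Fin 4) : QD b11 3 s :=
  ∑ i ∈ Finset.univ.erase j, G0 s (Finset.univ.erase j) i k

theorem XX_eq {s} {a b p q : Fin 4} (h : [a, b, p, q].Nodup) (k) :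
    XX s p k = G0 s {a, b, q} a k + G0 s {a, b, q} b k + G0 s {a, b, q} q k := by
  have : (Finset.univ : Finset (Fin 4)).erase p = {a, b, q} := by
    revert a b p q; decide
  rw [XX, this, Finset.sum_insert, Finset.sum_insert, Finset.sum_singleton]
  · abel
  all_goals simp at h ⊢; tauto

theorem half1 {s} (hs : 3 ≤ s) {a b p q : Fin 4} (h : [a, b, p, q].Nodup) :
    XX s p q = (G0 s {q} q q + G0 s {a, q} q q + G0 s {b, q} q q + G0 s {a, b, q} q q) +
      (G0 s {p, q} p q + G0 s {a, p, q} p q + G0 s {b, p, q} p q) := by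
  have r1 := relG0 hs (I := {q}) (by simp) q
  have r2 := relG0 hs (I := {a, q}) Finset.card_le_two q
  have r3 := relG0 hs (I := {b, q}) Finset.card_le_two q
  rw [sum4 _ h] at r1 r2 r3
  have e1 : ({b, a, q} : Finset (Fin 4)) = {a, b, q} := Finset.insert_comm _ _ _
  have e2 : ({p, a, q} : Finset (Fin 4)) = {a, p, q} := Finset.insert_comm _ _ _
  have e3 : ({p, b, q} : Finset (Fin 4)) = {b, p, q} := Finset.insert_comm _ _ _
  have e4 : ({q, a, q} : Finset (Fin 4)) = {a, q} := by simp
  have e5 : ({q, b, q} : Finset (Fin 4)) = {b, q} := by simp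
  have e6 : ({a, a, q} : Finset (Fin 4)) = {a, q} := by simp
  have e7 : ({b, b, q} : Finset (Fin 4)) = {b, q} := by simp
  have e8 : ({q, q} : Finset (Fin 4)) = {q} := by simp
  rw [e8] at r1
  rw [e1, e2, e4, e6] at r2
  rw [e3, e5, e7] at r3
  rw [XX_eq h]
  linear_combination (norm := skip) (1 : kk) • r1 + (1 : kk) • r2 + (1 : kk) • r3
  match_scalars <;> decide

theorem half2 {s} (hs : 3 ≤ s) {a b p q : Fin 4} (h : [a, b, p, q].Nodup) :
    (G0 s {q} q q + G0 s {a, q} q q + G0 s {b, q} q q + G0 s {a, b, q} q q) +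
      (G0 s {p} p q + G0 s {a, p} p q + G0 s {b, p} p q + G0 s {a, b, p} p q) = 0 := by
  have r0 := relG0 hs (I := ∅) (by simp) q
  have r1 := relG0 hs (I := {a}) (by simp) q
  have r2 := relG0 hs (I := {b}) (by simp) q
  have r3 := relG0 hs (I := {a, b}) Finset.card_le_two q
  rw [sum4 _ h] at r0 r1 r2 r3
  have i0 : ∀ x : Fin 4, insert x (∅ : Finset (Fin 4)) = {x} := fun _ => rfl
  rw [i0, i0, i0, i0] at r0
  have e1 : ({a, a} : Finset (Fin 4)) = {a} := by simp
  have e2 : ({b, b} : Finset (Fin 4)) = {b} := by simp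
  have e3 : ({a, a, b} : Finset (Fin 4)) = {a, b} := by simp
  have e4 : ({b, a, b} : Finset (Fin 4)) = {a, b} := by simp
  have t : ∀ x, ({x, a, b} : Finset (Fin 4)) = {a, b, x} := by intro x; ext; simp; tauto
  rw [e1, Finset.pair_comm b a, Finset.pair_comm p a, Finset.pair_comm q a] at r1
  rw [e2, Finset.pair_comm p b, Finset.pair_comm q b] at r2
  rw [e3, e4, t p, t q] at r3
  linear_combination (norm := skip) (1 : kk) • r0 + (1 : kk) • r1 + (1 : kk) • r2 + (1 : kk) • r3
  match_scalars <;> decide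

theorem ne_univ3 (a b c : Fin 4) : ({a, b, c} : Finset (Fin 4)) ≠ Finset.univ := by
  revert a b c; decide

theorem ne_univ2 (a b : Fin 4) : ({a, b} : Finset (Fin 4)) ≠ Finset.univ := by
  revert a b; decide

theorem ne_univ1 (a : Fin 4) : ({a} : Finset (Fin 4)) ≠ Finset.univ := by
  revert a; decide

theorem XX_sym {s} (hs : 3 ≤ s) (p q) : XX s p q = XX s q p := by
  by_cases hpq : p = q
  · rw [hpq]
  obtain ⟨a, b, h⟩ := ex_pq hpq
  have h1 : [a, b, p, q].Nodup := by revert a b p q; decide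
  have h2 : [a, b, q, p].Nodup := by clear h1; revert a b p q; decide
  have A1 := half1 hs h1
  have A2 := half1 hs h2
  have B1 := half2 hs h1
  have B2 := half2 hs h2
  have E := relE hs h1
  rw [G0_sym hs (ne_univ2 q p) q p, G0_sym hs (ne_univ3 a q p) q p, G0_sym hs (ne_univ3 b q p) q p,
    Finset.pair_comm q p] at A2
  rw [G0_sym hs (ne_univ1 q) q p, G0_sym hs (ne_univ2 a q) q p, G0_sym hs (ne_univ2 b q) q p,
    G0_sym hs (ne_univ3 a b q) q p] at B2
  linear_combination (norm := skip) (1 : kk) • A1 + (1 : kk) • A2 + (1 : kk) • B1 + (1 : kk) • B2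
    + (1 : kk) • E
  match_scalars <;> decide

def GG (s : ℕ) (I : Finset (Fin 4)) (j k : Fin 4) : QD b11 3 s :=
  if I = Finset.univ then XX s j k else G0 s I j k

theorem GG_sym {s} (hs : 3 ≤ s) (I j k) : GG s I j k = GG s I k j := by
  rw [GG, GG]
  split_ifs with h
  · exact XX_sym hs j k
  · exact G0_sym hs h j k

theorem GG_list {s} (hs : 3 ≤ s) (L : List (Fin 4)) (h : L.length = s) (j k) :
    cl b11 3 s (mo L (xx j k)) = GG s L.toFinset j k := by
  rw [GG]
  split_ifs with hu
  · exact fullG0 L h hu j k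
  · exact G0_eq j k h (by rintro rfl; simp at h; omega) rfl

theorem toggle {V : Type*} [AddCommGroup V] [Module kk V] (F : Finset (Fin 4) → V) (i : Fin 4)
    (S : Finset (Finset (Fin 4))) (hS : ∀ I ∈ S, symmDiff I {i} ∈ S)
    (hF : ∀ I, F (symmDiff I {i}) = F I) : ∑ I ∈ S, F I = 0 := by
  refine Finset.sum_involution (fun I _ => symmDiff I {i}) ?_ ?_ ?_ ?_
  · intro I _; rw [hF]; exact two0 _
  · intro I _ _ h
    have := congrArg (fun J => i ∈ J) h
    simp [Finset.mem_symmDiff] at this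
  · exact fun I hI => hS I hI
  · intro I _; rw [symmDiff_assoc, symmDiff_self]; simp

theorem insert_symm (i : Fin 4) (I : Finset (Fin 4)) : insert i (symmDiff I {i}) = insert i I := by
  ext x; simp [Finset.mem_symmDiff]; tauto

theorem relGG_proper {s} (hs : 3 ≤ s) {I : Finset (Fin 4)} (hI : I ≠ Finset.univ) (k) :
    ∑ i, GG s (insert i I) i k = 0 := by
  by_cases hc : I.card ≤ 2
  · rw [← relG0 hs hc k]
    apply Finset.sum_congr rfl
    intro i _
    rw [GG, if_neg]
    intro h
    have h1 := Finset.card_insert_le i I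
    rw [h] at h1
    simp at h1
    omega
  · have : ∃ j, I = Finset.univ.erase j := by
      revert hI hc; revert I; decide
    obtain ⟨j, rfl⟩ := this
    rw [← Finset.add_sum_erase _ _ (Finset.mem_univ j), Finset.insert_erase (Finset.mem_univ j)]
    have : ∑ x ∈ Finset.univ.erase j, GG s (insert x (Finset.univ.erase j)) x k = XX s j k := by
      apply Finset.sum_congr rfl
      intro i hi
      rw [Finset.insert_eq_of_mem hi, GG, if_neg hI]
    rw [this, GG, if_pos rfl]
    exact two0 _

theorem relGG {s} (hs : 3 ≤ s) (I : Finset (Fin 4)) (k) :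
    ∑ i, GG s (insert i I) i k = 0 := by
  by_cases hI : I = Finset.univ
  · have h1 : ∑ I, ∑ i, GG s (insert i I) i k = 0 := by
      rw [Finset.sum_comm]
      apply Finset.sum_eq_zero
      intro i _
      apply toggle _ i
      · simp
      · intro I; rw [insert_symm]
    rw [Finset.sum_eq_single Finset.univ] at h1
    · rw [hI, h1]
    · intro J _ hJ; exact relGG_proper hs hJ k
    · simp
  · exact relGG_proper hs hI k

def dl (s : ℕ) (J : Finset (Fin 4)) (j k : Fin 4) : QD b11 3 s :=
  ∑ K with J ⊆ K, GG s K j k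

theorem dl_sym {s} (hs : 3 ≤ s) (J j k) : dl s J j k = dl s J k j :=
  Finset.sum_congr rfl (fun I _ => GG_sym hs I j k)

theorem dl_rel {s} (hs : 3 ≤ s) (J : Finset (Fin 4)) (k) :
    ∑ i, (if i ∈ J then (1 : kk) else 0) • dl s J i k = 0 := by
  have h1 : ∑ I with J ⊆ I, ∑ i, GG s (insert i I) i k = 0 :=
    Finset.sum_eq_zero (fun I _ => relGG hs I k)
  rw [Finset.sum_comm] at h1
  rw [← h1]
  apply Finset.sum_congr rfl
  intro i _
  by_cases hi : i ∈ J
  · rw [if_pos hi, one_smul]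
    apply Finset.sum_congr rfl
    intro I hI
    rw [Finset.insert_eq_of_mem ((Finset.mem_filter.1 hI).2 hi)]
  · rw [if_neg hi, zero_smul]
    symm
    apply toggle _ i
    · intro I hI
      rw [Finset.mem_filter] at hI ⊢
      refine ⟨Finset.mem_univ _, fun x hx => ?_⟩
      rw [Finset.mem_symmDiff]
      left
      refine ⟨hI.2 hx, ?_⟩
      rw [Finset.mem_singleton]
      rintro rfl; exact hi hx
    · intro I; rw [insert_symm]

theorem dl_inv {s} (I : Finset (Fin 4)) (j k) : GG s I j k = ∑ J with I ⊆ J, dl s J j k := by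
  have h1 : ∑ J with I ⊆ J, dl s J j k =
      ∑ K, ∑ J, (if I ⊆ J ∧ J ⊆ K then GG s K j k else 0) := by
    rw [Finset.sum_comm, Finset.sum_filter]
    apply Finset.sum_congr rfl
    intro J _
    rw [dl, Finset.sum_filter]
    by_cases h : I ⊆ J
    · simp [h]
    · simp [h]
  rw [h1, Finset.sum_eq_single I]
  · rw [Finset.sum_eq_single I]
    · simp
    · intro J _ hJ
      rw [if_neg]
      rintro ⟨a, b⟩
      exact hJ (Finset.Subset.antisymm b a)
    · simp
  · intro K _ hK
    by_cases hs : I ⊆ K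
    · obtain ⟨x, hx, hx'⟩ := Finset.exists_of_ssubset (Finset.ssubset_iff_subset_ne.2 ⟨hs, hK.symm⟩)
      apply toggle _ x
      · simp
      · intro J
        have : (I ⊆ symmDiff J {x} ∧ symmDiff J {x} ⊆ K) ↔ (I ⊆ J ∧ J ⊆ K) := by
          simp only [Finset.subset_iff, Finset.mem_symmDiff, Finset.mem_singleton]
          constructor
          · rintro ⟨a, b⟩
            refine ⟨fun y hy => ?_, fun y hy => ?_⟩
            · rcases a hy with h | h
              · exact h.1
              · exact absurd (h.1 ▸ hy) hx'
            · by_cases hyx : y = x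
              · rw [hyx]; exact hx
              · exact b (Or.inl ⟨hy, hyx⟩)
          · rintro ⟨a, b⟩
            refine ⟨fun y hy => Or.inl ⟨a hy, ?_⟩, fun y hy => ?_⟩
            · rintro rfl; exact hx' hy
            · rcases hy with h | h
              · exact b h.1
              · rw [h.1]; exact hx
        simp only [this]
    · apply Finset.sum_eq_zero
      intro J _
      rw [if_neg]
      rintro ⟨a, b⟩
      exact hs (a.trans b)
  · simp

end S13

namespace S13

set_option linter.unusedSimpArgs false

theorem ex_pqr (i0 : Fin 4) : ∃ p q r, [i0, p, q, r].Nodup := by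
  revert i0; decide

theorem quad {V : Type} [AddCommGroup V] [Module kk V] (ε : Fin 4 → kk) (i0 : Fin 4)
    (hi : ε i0 = 1) (a : Fin 4 → Fin 4 → kk) (B : Fin 4 → Fin 4 → V)
    (hsym : ∀ j k, B j k = B k j) (hB : ∀ k, ∑ i, ε i • B i k = 0) (c : kk)
    (hc : ∀ v : Fin 4 → kk, v ≠ 0 → ∑ i, ε i * v i = 0 → ∑ j, ∑ k, a j k * (v j * v k) = c) :
    ∑ j, ∑ k, a j k • B j k = 0 := by
  obtain ⟨p, q, r, h⟩ := ex_pqr i0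
  have hn := h
  simp only [List.nodup_cons, List.mem_cons, List.not_mem_nil, or_false, not_or,
    List.nodup_nil, not_false_eq_true, and_true] at hn
  obtain ⟨⟨n1, n2, n3⟩, ⟨n4, n5⟩, n6⟩ := hn
  have two : ∀ x : kk, x + x = 0 := by decide
  have F : ∀ x y z : kk, (x ≠ 0 ∨ y ≠ 0 ∨ z ≠ 0) →
      ∀ w, w = ε p * x + ε q * y + ε r * z →
      (a i0 i0 * (w * w) + a i0 p * (w * x) + a i0 q * (w * y) + a i0 r * (w * z)) +
      (a p i0 * (x * w) + a p p * (x * x) + a p q * (x * y) + a p r * (x * z)) +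
      (a q i0 * (y * w) + a q p * (y * x) + a q q * (y * y) + a q r * (y * z)) +
      (a r i0 * (z * w) + a r p * (z * x) + a r q * (z * y) + a r r * (z * z)) = c := by
    intro x y z hne w hw
    have := hc (fun i => if i = i0 then w else if i = p then x else if i = q then y else z) ?_ ?_
    · simp only [sum4 _ h] at this
      simpa [n1, n2, n3, n4, n5, n6, Ne.symm n1, Ne.symm n2, Ne.symm n3, Ne.symm n4, Ne.symm n5,
        Ne.symm n6] using this
    · intro h0
      have e1 := congrFun h0 p
      have e2 := congrFun h0 q
      have e3 := congrFun h0 r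
      simp [n1, n2, n3, n4, n5, n6, Ne.symm n1, Ne.symm n2, Ne.symm n3, Ne.symm n4, Ne.symm n5,
        Ne.symm n6] at e1 e2 e3
      tauto
    · simp only [sum4 _ h]
      simp [n1, n2, n3, n4, n5, n6, Ne.symm n1, Ne.symm n2, Ne.symm n3, Ne.symm n4, Ne.symm n5,
        Ne.symm n6, hi]
      rw [hw]; have := two (ε p * x + ε q * y + ε r * z); linear_combination this
  have hB' : ∀ k, B i0 k = ε p • B p k + ε q • B q k + ε r • B r k := by
    intro k
    have := hB k
    rw [sum4 _ h, hi, one_smul] at this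
    apply eq_of_add
    rw [← this]; abel
  obtain ⟨A, hA⟩ : ∃ A : Fin 4 → Fin 4 → kk, ∀ t u, A t u =
    a t u + ε u * a t i0 + ε t * a i0 u + ε t * ε u * a i0 i0 := ⟨_, fun _ _ => rfl⟩
  have F2 : ∀ x y z : kk, (x ≠ 0 ∨ y ≠ 0 ∨ z ≠ 0) →
      A p p * (x * x) + A q q * (y * y) + A r r * (z * z) + (A p q + A q p) * (x * y) +
      (A p r + A r p) * (x * z) + (A q r + A r q) * (y * z) = c := by
    intro x y z hne
    rw [← F x y z hne _ rfl]
    simp only [hA]; ring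
  have g1 := F2 1 0 0 (by simp)
  have g2 := F2 0 1 0 (by simp)
  have g3 := F2 0 0 1 (by simp)
  have g4 := F2 1 1 0 (by simp)
  have g5 := F2 1 0 1 (by simp)
  have g6 := F2 0 1 1 (by simp)
  have g7 := F2 1 1 1 (by simp)
  simp only [mul_one, mul_zero, add_zero, zero_add] at g1 g2 g3 g4 g5 g6 g7
  have T : ∑ j, ∑ k, a j k • B j k =
      A p p • B p p + A q q • B q q + A r r • B r r + (A p q + A q p) • B p q +
      (A p r + A r p) • B p r + (A q r + A r q) • B q r := by
    simp only [sum4 _ h]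
    rw [hB' i0, hsym p i0, hsym q i0, hsym r i0, hB' p, hB' q, hB' r, hsym q p, hsym r p, hsym r q]
    simp only [hA]
    match_scalars <;> ring
  have z0 : c = 0 := by
    generalize A p q + A q p = m1 at *
    generalize A p r + A r p = m2 at *
    generalize A q r + A r q = m3 at *
    generalize A p p = m4 at *
    generalize A q q = m5 at *
    generalize A r r = m6 at *
    clear F F2 T hB' hA
    revert g1 g2 g3 g4 g5 g6 g7
    clear * -
    revert c m1 m2 m3 m4 m5 m6; decide
  rw [T]
  rw [z0] at g1 g2 g3 g4 g5 g6
  rw [g1, g2] at g4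
  rw [g1, g3] at g5
  rw [g2, g3] at g6
  simp only [zero_add] at g4 g5 g6
  rw [g1, g2, g3, g4, g5, g6]; simp

theorem sum1 (d : Fin 4 →₀ ℕ) (h : ∑ i, d i = 1) : ∃ j, d = Finsupp.single j 1 := by
  rw [Fin.sum_univ_four] at h
  have : d 0 = 1 ∨ d 1 = 1 ∨ d 2 = 1 ∨ d 3 = 1 := by omega
  rcases this with h1 | h1 | h1 | h1
  · exact ⟨0, by ext i; fin_cases i <;> simp <;> omega⟩
  · exact ⟨1, by ext i; fin_cases i <;> simp <;> omega⟩
  · exact ⟨2, by ext i; fin_cases i <;> simp <;> omega⟩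
  · exact ⟨3, by ext i; fin_cases i <;> simp <;> omega⟩

theorem good1 : Good b11 3 (Finsupp.single 3 3) := by
  refine ⟨?_, by simp, ?_⟩
  · rintro d hd ⟨j, h1, h2⟩
    rw [Fin.sum_univ_four] at hd
    match j, h1, h2 with
    | 0, _, h2 =>
      rw [wv_zero, Fin.sum_univ_four] at h2
      simp [b11] at h2
      omega
    | 1, h1, h2 =>
      have h1 := h1 0 (by norm_num)
      rw [wv_zero, Fin.sum_univ_four] at h1
      rw [wv, Fin.sum_univ_four] at h2
      simp [b11] at h1 h2
      omega
    | j + 2, _, h2 => simp [b11] at h2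
  · intro i
    by_cases hi : i = 3
    · exact ⟨2, by simp [hi]⟩
    · exact ⟨0, by simp [Ne.symm hi]⟩

theorem sf_xx (M j k) : sf (Finsupp.single 3 3) 0 M (xx j k) = M j 3 * M k 3 := by
  have e : (Finsupp.single 3 3 : Fin 4 →₀ ℕ) = Finsupp.single 3 1 + 2 • Finsupp.single 3 1 := by
    rw [Finsupp.smul_single, ← Finsupp.single_add]; rfl
  have hl : ∀ j, coeff (Finsupp.single 3 1) (substM M (X j)) = M j 3 := by
    intro j
    simp [substM, coeff_sum, coeff_X, Finsupp.single_left_inj]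
  rw [sf, sp, xx, map_mul, map_pow, e, coefCore _ _ _ _ 1 (substM_homog M (isHomogeneous_X _ _)), hl, hl]
  · intro i; rw [Finsupp.single_apply]; split_ifs <;> simp
  · simp

theorem base_xx (d : Fin 4 →₀ ℕ) (hd : ∑ i, d i = 3) (h : wLe (wv d) b11) :
    ∃ j k, monomial d 1 = xx j k := by
  rcases h with h | h
  · have h0 := congrFun h 0
    rw [wv_zero] at h0
    obtain ⟨j, hj⟩ := sum1 (par d) (by simpa [b11] using h0)
    obtain ⟨k, hk⟩ := sum1 (half d) (by
      simp only [b11, Fin.sum_univ_four, half_apply] at h0 hd ⊢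
      simp at h0
      omega)
    exact ⟨j, k, by rw [monomial_split, hj, hk]; rfl⟩
  · exact absurd h (good1.base d hd)

theorem i_key (s : ℕ) (hs : 3 ≤ s) {f : P4} (hf : f ∈ Pw (dg 3 s) (w3 b11 s)) (c : kk)
    (h0 : ∀ M, IsUnit M → sf (Finsupp.single 3 3) s M f = c) : f ∈ DD b11 3 s := by
  have key : ∃ a : Finset (Fin 4) → Fin 4 → Fin 4 → kk, a ∅ = 0 ∧
      cl b11 3 s f = ∑ J, ∑ j, ∑ k, a J j k • dl s J j k ∧
      ∀ M, sf (Finsupp.single 3 3) s M f =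
        ∑ j, ∑ k, a (Finset.univ.filter (uu M · = 1)) j k * (M j 3 * M k 3) := by
    refine span_induction2 (C := fun f => ∃ a : Finset (Fin 4) → Fin 4 → Fin 4 → kk, a ∅ = 0 ∧
      cl b11 3 s f = ∑ J, ∑ j, ∑ k, a J j k • dl s J j k ∧
      ∀ M, sf (Finsupp.single 3 3) s M f =
        ∑ j, ∑ k, a (Finset.univ.filter (uu M · = 1)) j k * (M j 3 * M k 3)) ?_ ?_ ?_ hf
    · exact ⟨0, rfl, by simp, by simp [sf_zero]⟩
    · rintro x y ⟨a, a0, a1, a2⟩ ⟨b, b0, b1, b2⟩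
      refine ⟨a + b, by simp [a0, b0], ?_, ?_⟩
      · simp [add_smul, Finset.sum_add_distrib, a1, b1]
      · intro M
        simp [add_mul, Finset.sum_add_distrib, sf_add, a2, b2]
    · rintro _ ⟨d, hd, hw, rfl⟩
      rcases decomp b11 3 s d hd with h | ⟨L, d', h1, h2, h3, h4⟩
      · refine ⟨0, rfl, ?_, ?_⟩
        · simp only [Pi.zero_apply, zero_smul, Finset.sum_const_zero]
          rw [cl_zero_iff]
          exact Submodule.mem_sup_right (Submodule.subset_span ⟨d, hd, h, rfl⟩)
        · intro M
          rw [sf_PwLt_mono good1 M s d hd h]; simp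
      · obtain ⟨j, k, hjk⟩ := base_xx d' h2 (h4.1 hw)
        rw [hjk] at h3
        rw [h3]
        have hL : L ≠ [] := by rintro rfl; simp at h1; omega
        refine ⟨fun J j' k' => if L.toFinset ⊆ J then (if j' = j then if k' = k then 1 else 0 else 0)
          else 0, ?_, ?_, ?_⟩
        · have : ¬ L.toFinset ⊆ ∅ := fun h => hL (List.toFinset_eq_empty_iff _ |>.1
            (Finset.subset_empty.1 h))
          funext j' k'
          exact if_neg this
        · rw [GG_list hs L h1, dl_inv, Finset.sum_filter]
          apply Finset.sum_congr rfl
          intro J _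
          split_ifs with hJ <;> simp [ite_smul] <;> tauto
        · intro M
          rw [sf_mo _ 0 M L _ s (by omega), prod_set, sf_xx]
          have : ∀ i ∈ L.toFinset, uu M i = if i ∈ Finset.univ.filter (uu M · = 1) then (1 : kk) else 0 := by
            intro i _
            rcases kk_cases (uu M i) with h | h <;> simp [h]
          rw [Finset.prod_congr rfl this, prod_ind]
          split_ifs with hJ <;> simp <;> tauto
  obtain ⟨a, a0, a1, a2⟩ := key
  rw [← cl_zero_iff, a1]
  apply Finset.sum_eq_zero
  intro J _
  by_cases hJ : J = ∅
  · rw [hJ, a0]; simp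
  obtain ⟨i0, hi0⟩ := Finset.nonempty_iff_ne_empty.2 hJ
  refine quad (fun i => if i ∈ J then 1 else 0) i0 (by simp [hi0]) (a J) (dl s J) (dl_sym hs J)
    (dl_rel hs J) c ?_
  intro v hv hε
  obtain ⟨M, hM, hu, hMv⟩ := ex_mat (fun i => if i ∈ J then 1 else 0) v
    (fun h => by simpa [hi0] using congrFun h i0) hv hε
  have := a2 M
  rw [h0 M hM, hu] at this
  rw [this]
  have e : Finset.univ.filter (fun i => (if i ∈ J then (1:kk) else 0) = 1) = J := by
    ext i; simp
  simp only [hMv, e]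

theorem PwLt_le (n w) : PwLt n w ≤ Pw n w := by
  apply Submodule.span_mono
  rintro _ ⟨d, h1, h2, rfl⟩
  exact ⟨d, h1, Or.inr h2, rfl⟩

theorem mem_wDenom {n w} {f : P4} (h : f ∈ Pw n w) (h2 : f ∈ hitSub n ⊔ PwLt n w) :
    f ∈ wDenom n w := by
  obtain ⟨x, hx, y, hy, rfl⟩ := Submodule.mem_sup.1 h2
  refine Submodule.add_mem_sup ⟨hx, ?_⟩ hy
  have := Submodule.sub_mem _ h (PwLt_le n w hy)
  simpa using this

theorem wDenom_le (n w) : wDenom n w ≤ hitSub n ⊔ PwLt n w :=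
  sup_le_sup_right inf_le_left _

theorem QwMk_zero {n w} (x : Pw n w) : QwMk n w x = 0 ↔ x.1 ∈ wDenom n w := by
  simp [QwMk, Submodule.Quotient.mk_eq_zero]

theorem inv_sf {b m b0 k} (hg : Good b m b0) {f : P4} (M : Mat)
    (h : substM M f - f ∈ wDenom (dg m k) (w3 b k)) : sf b0 k M f = sf b0 k 1 f := by
  have := sf_DD hg (wDenom_le _ _ h)
  rw [sf_sub, sf_subst, mul_one] at this
  exact sub_eq_zero.1 this

theorem w3_eq (b k j) : w3 b k j = if j < k then 3 else b (j - k) := by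
  induction k generalizing j with
  | zero => simp [w3]
  | succ k ih =>
    cases j with
    | zero => simp [w3]
    | succ j => simp [w3, ih]

theorem dg_eq (m k) : dg m k + 3 = (m + 3) * 2 ^ k := by
  induction k with
  | zero => simp [dg]
  | succ k ih => rw [dg, pow_succ]; linarith

theorem part1 (s : ℕ) (hs : 3 ≤ s) : QwInv (dg 3 s) (w3 b11 s) glSet = ⊥ := by
  rw [eq_bot_iff]
  rintro _ ⟨x, hx, rfl⟩
  simp only [Submodule.comap_coe, Set.mem_preimage, Submodule.coe_subtype, SetLike.mem_coe,
    Submodule.mem_iInf, Submodule.mem_comap] at hx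
  rw [Submodule.mem_bot, QwMk_zero]
  exact mem_wDenom x.2 (i_key s hs x.2 _ (fun M hM => inv_sf good1 M (hx M hM)))

theorem homog_le_Pw (N : ℕ) {f : P4} (hf : f.IsHomogeneous (dg 0 N)) :
    f ∈ Pw (dg 0 N) (w3 b00 N) := by
  refine homog_induction (C := fun f => f ∈ Pw (dg 0 N) (w3 b00 N)) (Submodule.zero_mem _)
    (fun a b => Submodule.add_mem _) ?_ hf
  intro d hd
  refine Submodule.subset_span ⟨d, hd, ?_, rfl⟩
  rcases decomp b00 0 N d hd with h | ⟨L, d', h1, h2, h3, h4⟩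
  · exact Or.inr h
  · rw [h4]
    left
    have hd' : d' = 0 := by
      ext i
      exact Finset.sum_eq_zero_iff.1 h2 i (Finset.mem_univ _)
    subst hd'
    funext j; simp [wv, b00]

theorem Pw_homog {n w} {f : P4} (h : f ∈ Pw n w) : f.IsHomogeneous n := by
  refine span_induction2 (C := fun f => f.IsHomogeneous n) (isHomogeneous_zero _ _ _)
    (fun a b ha hb => ha.add hb) ?_ h
  rintro _ ⟨d, h1, h2, rfl⟩
  exact isHomogeneous_monomial _ (by rw [deg_eq, h1])

theorem part2 (r : ℕ) (hr : 0 < r) :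
    QwInv (dg 0 (r + 3)) (w3 b00 (r + 3)) glSet =
      QwSpanOf (dg 0 (r + 3)) (w3 b00 (r + 3)) {zetaStar (2 ^ (r + 3))} := by
  have hz := zeta_homog r
  have hzP := homog_le_Pw _ hz
  have fin : ∀ f : P4, f.IsHomogeneous (dg 0 (r + 3)) →
      (∀ M, IsUnit M → sf 0 (r + 3) M f = 0) → f ∈ wDenom (dg 0 (r + 3)) (w3 b00 (r + 3)) :=
    fun f hf h => mem_wDenom (homog_le_Pw _ hf) (ii_key _ (by omega) hf h)
  apply le_antisymm
  · rintro _ ⟨x, hx, rfl⟩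
    simp only [Submodule.comap_coe, Set.mem_preimage, Submodule.coe_subtype, SetLike.mem_coe,
      Submodule.mem_iInf, Submodule.mem_comap] at hx
    refine ⟨(sf 0 (r + 3) 1 x.1) • ⟨_, hzP⟩, ?_, ?_⟩
    · simp only [Submodule.comap_coe, Set.mem_preimage, Submodule.coe_subtype, SetLike.mem_coe]
      exact Submodule.smul_mem _ _ (Submodule.subset_span rfl)
    · symm
      rw [← sub_eq_zero, ← map_sub, QwMk_zero]
      apply fin
      · exact (Pw_homog x.2).sub (((homogeneousSubmodule _ _ _).smul_mem _ hz))
      · intro M hM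
        have := inv_sf good0 M (hx M hM)
        change sf 0 (r + 3) M (x.1 - (sf 0 (r + 3) 1 x.1) • zetaStar (2 ^ (r + 3))) = 0
        rw [sf_sub, sf_smul, zeta_sf r hr M hM, this, mul_one, sub_self]
  · rintro _ ⟨x, hx, rfl⟩
    refine ⟨x, ?_, rfl⟩
    simp only [Submodule.comap_coe, Set.mem_preimage, Submodule.coe_subtype, SetLike.mem_coe,
      Submodule.mem_iInf, Submodule.mem_comap] at hx ⊢
    intro M hM
    obtain ⟨c, hc⟩ := Submodule.mem_span_singleton.1 hx
    change substM M x.1 - x.1 ∈ _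
    apply fin
    · exact (substM_homog M (Pw_homog x.2)).sub (Pw_homog x.2)
    · intro N hN
      rw [sf_sub, sf_subst, ← hc, sf_smul, sf_smul, zeta_sf r hr N hN,
        zeta_sf r hr _ (hM.mul hN), sub_self]

theorem part3 (r : ℕ) (hr : 0 < r) :
    QwSpanOf (dg 0 (r + 3)) (w3 b00 (r + 3)) {zetaStar (2 ^ (r + 3))} ≠ ⊥ := by
  intro h
  have hzP := homog_le_Pw _ (zeta_homog r)
  have h1 : QwMk (dg 0 (r + 3)) (w3 b00 (r + 3)) ⟨_, hzP⟩ ∈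
      QwSpanOf (dg 0 (r + 3)) (w3 b00 (r + 3)) {zetaStar (2 ^ (r + 3))} :=
    ⟨_, Submodule.subset_span rfl, rfl⟩
  rw [h, Submodule.mem_bot, QwMk_zero] at h1
  have := sf_DD good0 (wDenom_le _ _ h1)
  rw [zeta_sf r hr 1 isUnit_one] at this
  exact one_ne_zero this

theorem final (s n e : ℕ) (hs : 3 ≤ s) (hn : n = 6 * 2 ^ s - 3)
    (he : e = 2 ^ (s + 1)) :
    QwInv n (fun j => if j < s then 3 else if j < s + 2 then 1 else 0) glSet = ⊥ ∧
    (QwInv n (fun j => if j < s + 1 then 3 else 0) glSet =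
        QwSpanOf n (fun j => if j < s + 1 then 3 else 0) {zetaStar e} ∧
      QwSpanOf n (fun j => if j < s + 1 then 3 else 0) {zetaStar e} ≠ ⊥) := by
  have e1 : (fun j => if j < s then 3 else if j < s + 2 then 1 else 0) = w3 b11 s := by
    funext j
    rw [w3_eq, b11]
    split_ifs <;> first | rfl | omega
  have e2 : (fun j => if j < s + 1 then 3 else 0) = w3 b00 (s + 1) := by
    funext j
    rw [w3_eq, b00]
  have n1 : n = dg 3 s := by have := dg_eq 3 s; omega
  have n2 : n = dg 0 (s + 1) := by have := dg_eq 0 (s + 1); rw [pow_succ] at this; omega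
  rw [e1, e2, he]
  obtain ⟨r, rfl⟩ : ∃ r, s = r + 2 := ⟨s - 2, by omega⟩
  refine ⟨n1 ▸ part1 _ hs, ?_, ?_⟩
  · rw [n2]; exact part2 r (by omega)
  · rw [n2]; exact part3 r (by omega)

end S13

/-- For `s ≥ 3`, `n = 6·2^s - 3`, `e = 2^{s+1}`, and the weight vectors
`ω₁ = (3,…,3,1,1)` (`s` threes) and `ω₂ = (3,…,3)` (`s+1` threes):
(i) the `GL_4(F_2)`-invariants of `(Q_n)^{ω₁}` are trivial;
(ii) the `GL_4(F_2)`-invariants of `(Q_n)^{ω₂}` are one-dimensional, spanned by the class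
of `ζ*`. -/
theorem statement_13 (s n e : ℕ) (hs : 3 ≤ s) (hn : n = 6 * 2 ^ s - 3)
    (he : e = 2 ^ (s + 1)) :
    QwInv n (fun j => if j < s then 3 else if j < s + 2 then 1 else 0) glSet = ⊥ ∧
    (QwInv n (fun j => if j < s + 1 then 3 else 0) glSet =
        QwSpanOf n (fun j => if j < s + 1 then 3 else 0) {zetaStar e} ∧
      QwSpanOf n (fun j => if j < s + 1 then 3 else 0) {zetaStar e} ≠ ⊥) := by
  exact S13.final s n e hs hn he

end
end

section
/- In Q_4 the following hold. (i) The Σ_4-submodule generated by the class of x_3x_4^3 equals the span of the classes of the 12 monomials x_ix_j^3 with i ≠ j, and its subspace of Σ_4-invariants is one-dimensional, spanned by the class of the sum of all 12 monomials x_ix_j^3 (i ≠ j). (ii) The Σ_4-submodule generated by the class of x_2x_3x_4^2 equals the span of the classes of the 8 monomials obtained by assigning the exponents 1, 1, 2 to three distinct variables among x_1,...,x_4 such that the variable carrying exponent 2 is not the smallest-index variable appearing, and its subspace of Σ_4-invariants is trivial. -/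
/-!
Common setup: the polynomial algebra `P_4 = F_2[x_1,x_2,x_3,x_4]` (variables `X 0, ..., X 3`),
the Steenrod action, hit polynomials, the cohit spaces `Q_n`, and the (induced) actions of
`GL_4(F_2)` and of the symmetric group `Σ_4` on `Q_n`.
-/

open MvPolynomial

noncomputable section

def EE (e : Fin 4 → ℕ) : Fin 4 →₀ ℕ := Finsupp.equivFunOnFinite.symm e

theorem EE_apply (e : Fin 4 → ℕ) (i : Fin 4) : EE e i = e i := rfl

theorem EE_inj {e f : Fin 4 → ℕ} : EE e = EE f ↔ e = f :=
  Finsupp.equivFunOnFinite.symm.injective.eq_iff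

def mon (e : Fin 4 → ℕ) : P4 := monomial (EE e) 1

theorem mon_eq_prod (e : Fin 4 → ℕ) : mon e = ∏ i, X i ^ e i := by
  rw [mon, monomial_eq, Finsupp.prod_fintype _ _ (by simp)]
  simp [EE_apply]

theorem coeff_mon (n e : Fin 4 → ℕ) :
    coeff (EE n) (mon e) = if e = n then 1 else 0 := by
  rw [mon, coeff_monomial]; simp only [EE_inj]

theorem coeff_prod_aeval (q : Fin 4 → Polynomial kk) (n : Fin 4 → ℕ) :
    coeff (EE n) (∏ i, Polynomial.aeval (X i : P4) (q i)) = ∏ i, (q i).coeff (n i) := by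
  obtain ⟨N, hN⟩ : ∃ N, ∀ i, (q i).natDegree < N ∧ n i < N := by
    refine ⟨∑ i, ((q i).natDegree + n i + 1), fun i => ?_⟩
    have := Finset.single_le_sum (f := fun i => (q i).natDegree + n i + 1)
      (fun _ _ => Nat.zero_le _) (Finset.mem_univ i)
    omega
  have h1 : ∀ i, Polynomial.aeval (X i : P4) (q i) =
      ∑ a ∈ Finset.range N, (q i).coeff a • (X i : P4) ^ a := fun i =>
    Polynomial.aeval_eq_sum_range' (hN i).1 _
  simp only [h1]
  rw [Finset.prod_univ_sum, coeff_sum]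
  have h2 : ∀ p : Fin 4 → ℕ, coeff (EE n) (∏ i, (q i).coeff (p i) • (X i : P4) ^ p i) =
      (∏ i, (q i).coeff (p i)) * if p = n then 1 else 0 := by
    intro p
    rw [← coeff_mon, mon_eq_prod, ← smul_eq_mul, ← coeff_smul]
    congr 1
    simp only [smul_eq_C_mul, Finset.prod_mul_distrib, map_prod]
  simp only [h2]
  rw [Finset.sum_eq_single n]
  · simp
  · intro b _ hb; simp [hb]
  · intro h; exact absurd (by simpa using fun i => (hN i).2) h

theorem coeff_sq (k j : ℕ) : ((Polynomial.X + Polynomial.X ^ 2 : Polynomial kk) ^ k).coeff j =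
    if k ≤ j then ((k.choose (j - k) : ℕ) : kk) else 0 := by
  have : (Polynomial.X + Polynomial.X ^ 2 : Polynomial kk) =
    Polynomial.X * (1 + Polynomial.X) := by ring
  rw [this, mul_pow, Polynomial.coeff_X_pow_mul']
  simp only [Polynomial.coeff_one_add_X_pow]

def cf (m n : Fin 4 → ℕ) : kk :=
  ∏ i, if m i ≤ n i then (((m i).choose (n i - m i) : ℕ) : kk) else 0

theorem coeff_sqTotal_mon (m n : Fin 4 → ℕ) : coeff (EE n) (sqTotal (mon m)) = cf m n := by
  have : sqTotal (mon m) = ∏ i, Polynomial.aeval (X i : P4)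
      ((Polynomial.X + Polynomial.X ^ 2 : Polynomial kk) ^ m i) := by
    rw [mon_eq_prod, map_prod]
    simp [sqTotal]
  rw [this, coeff_prod_aeval]
  simp only [coeff_sq, cf]

def co (n : Fin 4 → ℕ) : P4 →ₗ[kk] kk := lcoeff kk (EE n)

theorem co_apply (n : Fin 4 → ℕ) (f : P4) : co n f = coeff (EE n) f := rfl

theorem degree_EE (n : Fin 4 → ℕ) : (EE n).degree = ∑ i, n i := by
  rw [Finsupp.degree_eq_sum]; rfl

theorem co_comp (n : Fin 4 → ℕ) (hn : ∑ i, n i = 4) (f : P4) :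
    co n (homogeneousComponent 4 f) = co n f := by
  rw [co_apply, coeff_homogeneousComponent, degree_EE, if_pos hn, co_apply]

/-- functionals killing hits -/
def Kills (φ : P4 →ₗ[kk] kk) : Prop :=
  (∀ f, φ (homogeneousComponent 4 f) = φ f) ∧ ∀ m : Fin 4 → ℕ, ∑ i, m i < 4 → φ (sqTotal (mon m)) = 0

theorem Kills.hit {φ : P4 →ₗ[kk] kk} (h : Kills φ) {p : P4} (hp : p ∈ hitSub 4) : φ p = 0 := by
  suffices hitSub 4 ≤ LinearMap.ker φ from this hp
  rw [hitSub, Submodule.span_le]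
  rintro _ ⟨d, hd, g, hg, rfl⟩
  change φ _ = 0
  rw [h.1]
  rw [g.as_sum, map_sum, map_sum]
  refine Finset.sum_eq_zero fun m hm => ?_
  have hdeg : m.degree = d := by
    have := (mem_homogeneousSubmodule d g).1 hg (mem_support_iff.1 hm)
    rwa [Finsupp.degree_eq_weight_one]
  have hE : EE m = m := Finsupp.ext fun _ => rfl
  have : (monomial m (coeff m g) : P4) = coeff m g • mon m := by
    rw [mon, smul_monomial, smul_eq_mul, mul_one, hE]
  rw [this, map_smul, map_smul, h.2, smul_zero]
  rw [← degree_EE m, hE]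
  exact lt_of_eq_of_lt hdeg hd

theorem Qmk_eq_zero_iff (f : P4) : Qmk 4 f = 0 ↔ homogeneousComponent 4 f ∈ hitSub 4 := by
  simp only [Qmk, LinearMap.comp_apply, Submodule.mkQ_apply, Submodule.Quotient.mk_eq_zero,
    Submodule.mem_comap]
  rfl

theorem Kills.eq {φ : P4 →ₗ[kk] kk} (h : Kills φ) {f g : P4} (hp : Qmk 4 f = Qmk 4 g) :
    φ f = φ g := by
  rw [← sub_eq_zero, ← map_sub, Qmk_eq_zero_iff] at hp
  have := h.hit hp
  rw [h.1, map_sub, sub_eq_zero] at this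
  exact this

def e2 (i j : Fin 4) : Fin 4 → ℕ := Pi.single i 1 + Pi.single j 3
def e3 (i j l : Fin 4) : Fin 4 → ℕ := Pi.single i 1 + Pi.single j 1 + Pi.single l 2

theorem mon_add (e f : Fin 4 → ℕ) : mon (e + f) = mon e * mon f := by
  simp [mon_eq_prod, pow_add, Finset.prod_mul_distrib]

theorem mon_single (i : Fin 4) (k : ℕ) : mon (Pi.single i k) = X i ^ k := by
  rw [mon_eq_prod, Finset.prod_eq_single i]
  · simp
  · intro b _ hb; simp [hb]
  · simp

theorem mon_e2 (i j : Fin 4) : mon (e2 i j) = X i * X j ^ 3 := by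
  simp [e2, mon_add, mon_single]
theorem mon_e3 (i j l : Fin 4) : mon (e3 i j l) = X i * X j * X l ^ 2 := by
  simp [e3, mon_add, mon_single]

theorem co_mon (n e : Fin 4 → ℕ) : co n (mon e) = if e = n then 1 else 0 := coeff_mon n e

theorem sum_e2 (i j : Fin 4) : ∑ a, e2 i j a = 4 := by decide +revert
theorem sum_e3 (i j l : Fin 4) : ∑ a, e3 i j l a = 4 := by decide +revert

theorem cf_zero {m n : Fin 4 → ℕ} (h : ∃ i, n i < m i) : cf m n = 0 := by
  obtain ⟨i, hi⟩ := h
  exact Finset.prod_eq_zero (Finset.mem_univ i) (if_neg (by omega))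

theorem cf2 : ∀ i j : Fin 4, i ≠ j → ∀ m : Fin 4 → Fin 4, ∑ a, (m a).1 < 4 →
    cf (fun a => (m a).1) (e2 i j) = 0 := by
  decide +kernel
theorem cf3 : ∀ i j l : Fin 4, i ≠ j → i ≠ l → j ≠ l → ∀ m : Fin 4 → Fin 4, ∑ a, (m a).1 < 4 →
    cf (fun a => (m a).1) (e3 i j l) + cf (fun a => (m a).1) (e3 i l j) = 0 := by
  decide +kernel

theorem toFin (m : Fin 4 → ℕ) (h : ∑ a, m a < 4) :
    ∃ m' : Fin 4 → Fin 4, m = fun a => (m' a).1 := by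
  refine ⟨fun a => ⟨m a, lt_of_le_of_lt ?_ h⟩, rfl⟩
  exact Finset.single_le_sum (f := m) (fun _ _ => Nat.zero_le _) (Finset.mem_univ a)

theorem kills2 {i j : Fin 4} (hij : i ≠ j) : Kills (co (e2 i j)) := by
  refine ⟨co_comp _ (sum_e2 i j), fun m hm => ?_⟩
  rw [co_apply, coeff_sqTotal_mon]
  obtain ⟨m', rfl⟩ := toFin m hm
  exact cf2 i j hij m' hm

def psi (i j l : Fin 4) : P4 →ₗ[kk] kk := co (e3 i j l) + co (e3 i l j)

theorem kills3 {i j l : Fin 4} (hij : i ≠ j) (hil : i ≠ l) (hjl : j ≠ l) : Kills (psi i j l) := by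
  refine ⟨fun f => ?_, fun m hm => ?_⟩
  · simp only [psi, LinearMap.add_apply, co_comp _ (sum_e3 _ _ _)]
  · simp only [psi, LinearMap.add_apply, co_apply, coeff_sqTotal_mon]
    obtain ⟨m', rfl⟩ := toFin m hm
    exact cf3 i j l hij hil hjl m' hm

theorem co_rename (σ : Equiv.Perm (Fin 4)) (n : Fin 4 → ℕ) (f : P4) :
    co n (rename σ f) = co (n ∘ σ) f := by
  simp only [co_apply]
  rw [← coeff_rename_mapDomain σ σ.injective f (EE (n ∘ σ))]
  congr 1
  ext i
  obtain ⟨j, rfl⟩ := σ.surjective i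
  rw [Finsupp.mapDomain_apply σ.injective]
  rfl

theorem e2_comp (σ : Equiv.Perm (Fin 4)) (i j : Fin 4) : e2 (σ i) (σ j) ∘ σ = e2 i j := by
  ext a; simp [e2, Pi.single_apply]
theorem e3_comp (σ : Equiv.Perm (Fin 4)) (i j l : Fin 4) :
    e3 (σ i) (σ j) (σ l) ∘ σ = e3 i j l := by
  ext a; simp [e3, Pi.single_apply]

theorem substM_perm (σ : Equiv.Perm (Fin 4)) : substM σ.toPEquiv.toMatrix = rename σ := by
  apply MvPolynomial.algHom_ext
  intro i
  simp [substM, PEquiv.toMatrix_apply, ite_smul]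

theorem inv_kills {f : P4} (hf : f ∈ invPre 4 permSet) {φ : P4 →ₗ[kk] kk} (h : Kills φ)
    (σ : Equiv.Perm (Fin 4)) : φ (rename σ f) = φ f := by
  simp only [invPre, Submodule.mem_inf, Submodule.mem_iInf, Submodule.mem_comap] at hf
  have := hf.2 _ ⟨σ, rfl⟩
  rw [substM_perm] at this
  have := h.hit this
  simp only [LinearMap.sub_apply, map_sub, sub_eq_zero] at this
  exact this

theorem inv2 {f : P4} (hf : f ∈ invPre 4 permSet) {i j : Fin 4} (hij : i ≠ j)
    (σ : Equiv.Perm (Fin 4)) : co (e2 (σ i) (σ j)) f = co (e2 i j) f := by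
  rw [← inv_kills hf (kills2 (σ.injective.ne hij)) σ, co_rename, e2_comp]

theorem inv3 {f : P4} (hf : f ∈ invPre 4 permSet) {i j l : Fin 4} (hij : i ≠ j) (hil : i ≠ l)
    (hjl : j ≠ l) (σ : Equiv.Perm (Fin 4)) : psi (σ i) (σ j) (σ l) f = psi i j l f := by
  rw [← inv_kills hf (kills3 (σ.injective.ne hij) (σ.injective.ne hil) (σ.injective.ne hjl)) σ]
  simp only [psi, LinearMap.add_apply, co_rename, e3_comp]

theorem e3_swap (i j l : Fin 4) : e3 i j l = e3 j i l := by
  simp only [e3, add_comm (Pi.single i 1)]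

theorem inv3_zero {f : P4} (hf : f ∈ invPre 4 permSet) {i j l : Fin 4} (hij : i ≠ j) (hil : i ≠ l)
    (hjl : j ≠ l) : psi i j l f = 0 := by
  have h1 := inv3 hf hij hil hjl (Equiv.swap i j)
  have h2 := inv3 hf hij hil hjl (Equiv.swap i l)
  rw [Equiv.swap_apply_left, Equiv.swap_apply_right,
    Equiv.swap_apply_of_ne_of_ne hil.symm hjl.symm] at h1
  rw [Equiv.swap_apply_left, Equiv.swap_apply_right,
    Equiv.swap_apply_of_ne_of_ne hij.symm hjl] at h2
  simp only [psi, LinearMap.add_apply] at *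
  rw [e3_swap j i l] at h1
  rw [e3_swap l i j, e3_swap l j i] at h2
  generalize co (e3 i j l) f = a at *
  generalize co (e3 i l j) f = b at *
  generalize co (e3 j l i) f = c at *
  clear hf hij hil hjl
  revert a b c
  decide

theorem trans2 : ∀ i j : Fin 4, i ≠ j → ∃ σ : Equiv.Perm (Fin 4), σ 2 = i ∧ σ 3 = j := by
  decide +kernel
theorem trans3 : ∀ i j l : Fin 4, i ≠ j → i ≠ l → j ≠ l →
    ∃ σ : Equiv.Perm (Fin 4), σ 1 = i ∧ σ 2 = j ∧ σ 3 = l := by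
  decide +kernel

theorem mem_inv_of_rename {n : ℕ} {f : P4} (h : f ∈ homog n)
    (hr : ∀ σ : Equiv.Perm (Fin 4), rename σ f = f) : f ∈ invPre n permSet := by
  simp only [invPre, Submodule.mem_inf, Submodule.mem_iInf, Submodule.mem_comap]
  refine ⟨h, ?_⟩
  rintro _ ⟨σ, rfl⟩
  rw [substM_perm]
  have : ((rename σ : P4 →ₐ[kk] P4).toLinearMap - LinearMap.id : P4 →ₗ[kk] P4) f = 0 := by
    simp [hr σ]
  rw [this]
  exact Submodule.zero_mem _

def S2 : P4 := ∑ i : Fin 4, ∑ j : Fin 4, if i ≠ j then X i * X j ^ 3 else 0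

theorem S2_rename (σ : Equiv.Perm (Fin 4)) : rename σ S2 = S2 := by
  simp only [S2, map_sum]
  refine Fintype.sum_equiv σ _ _ fun i => Fintype.sum_equiv σ _ _ fun j => ?_
  by_cases h : i = j <;> simp [h]

theorem mon_homog {e : Fin 4 → ℕ} {n : ℕ} (h : ∑ i, e i = n) : mon e ∈ homog n := by
  rw [homog, mem_homogeneousSubmodule]
  exact isHomogeneous_monomial _ (by rw [degree_EE, h])

theorem S2_homog : S2 ∈ homog 4 := by
  refine Submodule.sum_mem _ fun i _ => Submodule.sum_mem _ fun j _ => ?_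
  split_ifs
  · rw [← mon_e2]; exact mon_homog (sum_e2 i j)
  · exact Submodule.zero_mem _

def G2 : Set P4 := {f | ∃ i j : Fin 4, i ≠ j ∧ f = X i * X j ^ 3}
def G3 : Set P4 := {f | ∃ i j l : Fin 4, i < j ∧ i < l ∧ j ≠ l ∧ f = X i * X j * X l ^ 2}

theorem permSpan2 : permSpan 4 {X 2 * X 3 ^ 3} = Submodule.span kk (Qmk 4 '' G2) := by
  rw [permSpan]
  congr 1
  ext c
  constructor
  · rintro ⟨σ, f, rfl, rfl⟩
    exact ⟨_, ⟨σ 2, σ 3, σ.injective.ne (by decide), rfl⟩, by simp⟩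
  · rintro ⟨_, ⟨i, j, hij, rfl⟩, rfl⟩
    obtain ⟨σ, rfl, rfl⟩ := trans2 i j hij
    exact ⟨σ, _, rfl, by simp⟩

theorem e2_inj : ∀ i j a b : Fin 4, i ≠ j → a ≠ b → (e2 i j = e2 a b ↔ a = i ∧ b = j) := by
  decide +kernel

theorem expand2 {g : P4} (hg : g ∈ Submodule.span kk G2) :
    g = ∑ i : Fin 4, ∑ j : Fin 4, if i ≠ j then co (e2 i j) g • mon (e2 i j) else 0 := by
  induction hg using Submodule.span_induction with
  | mem x hx =>
    obtain ⟨i, j, hij, rfl⟩ := hx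
    rw [← mon_e2]
    have : ∀ a b : Fin 4, (if a ≠ b then co (e2 a b) (mon (e2 i j)) • mon (e2 a b) else 0) =
        if a = i then (if b = j then mon (e2 i j) else 0) else 0 := by
      intro a b
      by_cases hab : a = b
      · subst hab
        by_cases h1 : a = i
        · subst h1; simp [hij]
        · simp [h1]
      · rw [if_pos hab, co_mon]
        simp only [e2_inj i j a b hij hab]
        by_cases h1 : a = i
        · by_cases h2 : b = j
          · simp [h1, h2]
          · simp [h2]
        · simp [h1]
    simp only [this]
    simp
  | zero => simp
  | add x y _ _ hx hy =>
    conv_lhs => rw [hx, hy]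
    simp only [← Finset.sum_add_distrib]
    refine Finset.sum_congr rfl fun i _ => Finset.sum_congr rfl fun j _ => ?_
    split_ifs <;> simp [add_smul]
  | smul a x _ hx =>
    conv_lhs => rw [hx]
    simp only [Finset.smul_sum]
    refine Finset.sum_congr rfl fun i _ => Finset.sum_congr rfl fun j _ => ?_
    split_ifs <;> simp [mul_smul]

theorem S2_mem : Qmk 4 S2 ∈ Submodule.span kk (Qmk 4 '' G2) := by
  rw [← Submodule.map_span]
  refine Submodule.mem_map_of_mem ?_
  refine Submodule.sum_mem _ fun i _ => Submodule.sum_mem _ fun j _ => ?_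
  split_ifs with h
  · exact Submodule.subset_span ⟨i, j, h, rfl⟩
  · exact Submodule.zero_mem _

theorem part_i_inv : permSpan 4 {X 2 * X 3 ^ 3} ⊓ QInv 4 permSet =
    Submodule.span kk {Qmk 4 S2} := by
  rw [permSpan2]
  apply le_antisymm
  · rintro v ⟨hv1, hv2⟩
    rw [← Submodule.map_span] at hv1
    obtain ⟨g, hg, rfl⟩ := hv1
    obtain ⟨f, hf, hfg⟩ := hv2
    have key : ∀ i j : Fin 4, i ≠ j → co (e2 i j) g = co (e2 2 3) f := by
      intro i j hij
      rw [← (kills2 hij).eq hfg]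
      obtain ⟨σ, rfl, rfl⟩ := trans2 i j hij
      exact inv2 hf (by decide) σ
    rw [Submodule.mem_span_singleton]
    refine ⟨co (e2 2 3) f, ?_⟩
    rw [← map_smul]
    congr 1
    conv_rhs => rw [expand2 hg]
    simp only [S2, Finset.smul_sum]
    refine Finset.sum_congr rfl fun i _ => Finset.sum_congr rfl fun j _ => ?_
    split_ifs with h
    · rw [key i j h, mon_e2]
    · simp
  · rw [Submodule.span_singleton_le_iff_mem]
    exact ⟨S2_mem, Submodule.mem_map_of_mem (mem_inv_of_rename S2_homog S2_rename)⟩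

theorem S2_ne : Qmk 4 S2 ≠ 0 := by
  intro h
  have h1 := (kills2 (i := 0) (j := 1) (by decide)).eq (h.trans (map_zero (Qmk 4)).symm)
  have h2 : co (e2 0 1) S2 = 1 := by
    have : ∀ a b : Fin 4, co (e2 0 1) (if a ≠ b then X a * X b ^ 3 else 0) =
        if a ≠ b then (if e2 a b = e2 0 1 then 1 else 0) else 0 := by
      intro a b
      split_ifs <;> simp_all [← mon_e2, co_mon]
    simp only [S2, map_sum, this]
    decide +kernel
  rw [h2, map_zero] at h1
  exact one_ne_zero h1

theorem hit3 (a b c : Fin 4) :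
    Qmk 4 (X a * X b * X c ^ 2) = Qmk 4 (X c * X b * X a ^ 2) + Qmk 4 (X c * X a * X b ^ 2) := by
  have h0 : (mon (e3 a b c) + mon (e3 c b a) + mon (e3 c a b) : P4) ∈ hitSub 4 := by
    refine Submodule.subset_span ⟨3, by norm_num, X a * X b * X c, ?_, ?_⟩
    · rw [homog, mem_homogeneousSubmodule]
      exact ((isHomogeneous_X _ a).mul (isHomogeneous_X _ b)).mul (isHomogeneous_X _ c)
    · have e : sqTotal (X a * X b * X c) =
          (X a * X b * X c) + (mon (e3 a b c) + mon (e3 c b a) + mon (e3 c a b)) +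
          (X a * X b * X c * (X a * X b + X b * X c + X a * X c)) + (X a * X b * X c) ^ 2 := by
        simp only [mon_e3, sqTotal, map_mul, aeval_X]
        ring
      have hX : ∀ i : Fin 4, (X i : P4).IsHomogeneous 1 := fun i => isHomogeneous_X _ i
      have h3 : (X a * X b * X c : P4).IsHomogeneous 3 := ((hX a).mul (hX b)).mul (hX c)
      have h4 : (mon (e3 a b c) + mon (e3 c b a) + mon (e3 c a b) : P4) ∈
          homogeneousSubmodule (Fin 4) kk 4 :=
        Submodule.add_mem _ (Submodule.add_mem _ (mon_homog (sum_e3 _ _ _))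
          (mon_homog (sum_e3 _ _ _))) (mon_homog (sum_e3 _ _ _))
      have h5 : (X a * X b * X c * (X a * X b + X b * X c + X a * X c) : P4).IsHomogeneous 5 :=
        h3.mul ((((hX a).mul (hX b)).add ((hX b).mul (hX c))).add ((hX a).mul (hX c)))
      have h6 : ((X a * X b * X c) ^ 2 : P4).IsHomogeneous 6 := h3.pow 2
      rw [e, map_add, map_add, map_add, homogeneousComponent_of_mem h3,
        homogeneousComponent_of_mem h4, homogeneousComponent_of_mem h5,
        homogeneousComponent_of_mem h6]
      simp
  have h1 : Qmk 4 (mon (e3 a b c) + mon (e3 c b a) + mon (e3 c a b)) = 0 := by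
    rw [Qmk_eq_zero_iff, homogeneousComponent_of_mem (n := 4), if_pos rfl]
    · exact h0
    · exact Submodule.add_mem _ (Submodule.add_mem _ (mon_homog (sum_e3 _ _ _))
          (mon_homog (sum_e3 _ _ _))) (mon_homog (sum_e3 _ _ _))
  simp only [mon_e3, map_add] at h1
  rw [add_assoc] at h1
  have h2 := eq_neg_of_add_eq_zero_left h1
  rw [h2, ← neg_one_smul kk, show (-1 : kk) = 1 by decide, one_smul]

theorem permSpan3 : permSpan 4 {X 1 * X 2 * X 3 ^ 2} = Submodule.span kk (Qmk 4 '' G3) := by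
  apply le_antisymm
  · rw [permSpan, Submodule.span_le]
    rintro _ ⟨σ, f, rfl, rfl⟩
    have h12 : σ 1 ≠ σ 2 := σ.injective.ne (by decide)
    have h13 : σ 1 ≠ σ 3 := σ.injective.ne (by decide)
    have h23 : σ 2 ≠ σ 3 := σ.injective.ne (by decide)
    simp only [map_mul, map_pow, rename_X]
    generalize σ 1 = a at *
    generalize σ 2 = b at *
    generalize σ 3 = c at *
    have mem : ∀ i j l : Fin 4, i < j → i < l → j ≠ l →
        Qmk 4 (X i * X j * X l ^ 2) ∈ Submodule.span kk (Qmk 4 '' G3) :=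
      fun i j l h1 h2 h3 => Submodule.subset_span ⟨_, ⟨i, j, l, h1, h2, h3, rfl⟩, rfl⟩
    rw [SetLike.mem_coe]
    rcases lt_or_gt_of_ne h13 with h | h
    · rcases lt_or_gt_of_ne h12 with h' | h'
      · exact mem a b c h' h h23
      · rw [mul_comm (X a)]
        exact mem b a c h' (h'.trans h) h13
    · rcases lt_or_gt_of_ne h23 with h' | h'
      · rw [mul_comm (X a)]
        exact mem b a c (h'.trans h) h' h13
      · rw [hit3]
        exact Submodule.add_mem _ (mem c b a h' h h12.symm) (mem c a b h h' h12)
  · rw [Submodule.span_le]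
    rintro _ ⟨_, ⟨i, j, l, h1, h2, h3, rfl⟩, rfl⟩
    obtain ⟨σ, rfl, rfl, rfl⟩ := trans3 i j l h1.ne h2.ne h3
    exact Submodule.subset_span ⟨σ, _, rfl, by simp⟩

theorem e3_inj : ∀ i j l a b c : Fin 4, i < j → i < l → j ≠ l → a < b → a < c → b ≠ c →
    ((if e3 i j l = e3 b a c then 1 else 0) + (if e3 i j l = e3 b c a then 1 else 0) : kk) =
    if a = i ∧ b = j ∧ c = l then 1 else 0 := by
  decide +kernel

theorem expand3 {g : P4} (hg : g ∈ Submodule.span kk G3) :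
    g = ∑ i : Fin 4, ∑ j : Fin 4, ∑ l : Fin 4, if i < j ∧ i < l ∧ j ≠ l then
      psi j i l g • mon (e3 i j l) else 0 := by
  induction hg using Submodule.span_induction with
  | mem x hx =>
    obtain ⟨i, j, l, h1, h2, h3, rfl⟩ := hx
    rw [← mon_e3]
    have : ∀ a b c : Fin 4, (if a < b ∧ a < c ∧ b ≠ c then
          psi b a c (mon (e3 i j l)) • mon (e3 a b c) else 0) =
        if a = i then (if b = j then (if c = l then mon (e3 i j l) else 0) else 0) else 0 := by
      intro a b c
      by_cases hab : a < b ∧ a < c ∧ b ≠ c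
      · rw [if_pos hab, psi, LinearMap.add_apply, co_mon, co_mon,
          e3_inj i j l a b c h1 h2 h3 hab.1 hab.2.1 hab.2.2]
        by_cases g1 : a = i
        · by_cases g2 : b = j
          · by_cases g3 : c = l
            · simp [g1, g2, g3]
            · simp [g3]
          · simp [g2]
        · simp [g1]
      · rw [if_neg hab]
        split_ifs with g1 g2 g3
        · subst g1 g2 g3; exact absurd ⟨h1, h2, h3⟩ hab
        all_goals rfl
    simp only [this]
    simp
  | zero => simp
  | add x y _ _ hx hy =>
    conv_lhs => rw [hx, hy]
    simp only [← Finset.sum_add_distrib]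
    refine Finset.sum_congr rfl fun i _ => Finset.sum_congr rfl fun j _ =>
      Finset.sum_congr rfl fun l _ => ?_
    split_ifs <;> simp [add_smul]
  | smul a x _ hx =>
    conv_lhs => rw [hx]
    simp only [Finset.smul_sum]
    refine Finset.sum_congr rfl fun i _ => Finset.sum_congr rfl fun j _ =>
      Finset.sum_congr rfl fun l _ => ?_
    split_ifs <;> simp [mul_smul]

theorem part_ii_inv : permSpan 4 {X 1 * X 2 * X 3 ^ 2} ⊓ QInv 4 permSet = ⊥ := by
  rw [permSpan3, eq_bot_iff]
  rintro v ⟨hv1, hv2⟩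
  rw [← Submodule.map_span] at hv1
  obtain ⟨g, hg, rfl⟩ := hv1
  obtain ⟨f, hf, hfg⟩ := hv2
  have : g = 0 := by
    rw [expand3 hg]
    refine Finset.sum_eq_zero fun i _ => Finset.sum_eq_zero fun j _ =>
      Finset.sum_eq_zero fun l _ => ?_
    split_ifs with h
    · rw [← (kills3 h.1.ne' h.2.2 h.2.1.ne).eq hfg, inv3_zero hf h.1.ne' h.2.2 h.2.1.ne, zero_smul]
    · rfl
  rw [this, map_zero]
  exact Submodule.zero_mem _

/-- In `Q_4`:
(i) the `Σ_4`-submodule generated by `[x₃x₄³]` is the span of the classes of the 12 monomials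
`x_i x_j³` (`i ≠ j`), and its `Σ_4`-invariants are one-dimensional, spanned by the class of
the sum of all 12 monomials `x_i x_j³`;
(ii) the `Σ_4`-submodule generated by `[x₂x₃x₄²]` is the span of the classes of the 8
monomials with exponents `1, 1, 2` on three distinct variables in which the variable carrying
`2` is not the smallest-index variable appearing, and its `Σ_4`-invariants are trivial. -/
theorem statement_15 :
    (permSpan 4 {X 2 * X 3 ^ 3} =
        Submodule.span kk
          (Qmk 4 '' {f | ∃ i j : Fin 4, i ≠ j ∧ f = X i * X j ^ 3}) ∧
      permSpan 4 {X 2 * X 3 ^ 3} ⊓ QInv 4 permSet =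
        Submodule.span kk
          {Qmk 4 (∑ i : Fin 4, ∑ j : Fin 4, if i ≠ j then X i * X j ^ 3 else 0)} ∧
      Qmk 4 (∑ i : Fin 4, ∑ j : Fin 4, if i ≠ j then X i * X j ^ 3 else 0) ≠ 0) ∧
    (permSpan 4 {X 1 * X 2 * X 3 ^ 2} =
        Submodule.span kk
          (Qmk 4 ''
            {f | ∃ i j l : Fin 4, i < j ∧ i < l ∧ j ≠ l ∧ f = X i * X j * X l ^ 2}) ∧
      permSpan 4 {X 1 * X 2 * X 3 ^ 2} ⊓ QInv 4 permSet = ⊥) := by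
  exact ⟨⟨permSpan2, part_i_inv, S2_ne⟩, permSpan3, part_ii_inv⟩

end
end

section
/- Let q ≥ 1 and n ≥ 1 be integers with μ(n) < q. Then there exist integers s ≥ 0, r, and v ≥ 0 such that 0 ≤ μ(v) < r < q and n = r(2^s − 1) + v·2^s. -/
/-- `α n`: the number of ones in the binary expansion of `n`. -/
def binAlpha (n : ℕ) : ℕ := (Nat.digits 2 n).sum

/-- `μ n = min { k : α (n + k) ≤ k }`. -/
noncomputable def binMu (n : ℕ) : ℕ := sInf {k : ℕ | binAlpha (n + k) ≤ k}

theorem bA_even (u : ℕ) : binAlpha (2 * u) = binAlpha u := by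
  rcases Nat.eq_zero_or_pos u with rfl | h
  · rfl
  · unfold binAlpha
    rw [Nat.digits_def' (by norm_num) (by omega : 0 < 2 * u)]
    simp

theorem bA_odd (u : ℕ) : binAlpha (2 * u + 1) = binAlpha u + 1 := by
  unfold binAlpha
  rw [Nat.digits_def' (by norm_num) (by omega : 0 < 2 * u + 1)]
  have h1 : (2 * u + 1) % 2 = 1 := by omega
  have h2 : (2 * u + 1) / 2 = u := by omega
  rw [h1, h2, List.sum_cons]
  omega

theorem bA_le (u : ℕ) : binAlpha u ≤ u := Nat.digit_sum_le 2 u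

theorem bA_pow (j : ℕ) : binAlpha (2 ^ j) = 1 := by
  induction j with
  | zero => simp [binAlpha]
  | succ j ih => rw [pow_succ, mul_comm, bA_even, ih]

theorem bMu_spec (n : ℕ) : binAlpha (n + binMu n) ≤ binMu n := by
  have : {k : ℕ | binAlpha (n + k) ≤ k}.Nonempty := by
    have hlt : n < 2 ^ n := Nat.lt_two_pow_self
    refine ⟨2 ^ n - n, ?_⟩
    show binAlpha (n + (2 ^ n - n)) ≤ 2 ^ n - n
    rw [show n + (2 ^ n - n) = 2 ^ n by omega, bA_pow]
    omega
  exact Nat.sInf_mem this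

theorem bA_key (k : ℕ) (hk : 1 ≤ k) (m : ℕ) : k ≤ m → binAlpha m ≤ k →
    ∃ s w : ℕ, m = 2 ^ s * w ∧ k ≤ w ∧ binAlpha (w - 1) ≤ k - 1 := by
  induction m using Nat.strong_induction_on with
  | _ m ih =>
    intro hm ha
    obtain ⟨u, rfl | rfl⟩ := Nat.even_or_odd' m
    · by_cases hu : k ≤ u
      · rw [bA_even] at ha
        obtain ⟨s, w, h1, h2, h3⟩ := ih u (by omega) hu ha
        exact ⟨s + 1, w, by rw [h1]; ring, h2, h3⟩
      · refine ⟨0, 2 * u, by simp, hm, ?_⟩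
        rw [show 2 * u - 1 = 2 * (u - 1) + 1 by omega, bA_odd]
        have := bA_le (u - 1)
        omega
    · refine ⟨0, 2 * u + 1, by simp, hm, ?_⟩
      rw [bA_odd] at ha
      rw [Nat.add_sub_cancel, bA_even]
      omega

/-- If `q ≥ 1`, `n ≥ 1` and `μ(n) < q`, then `n` can be written in the generic form
`n = r(2^s - 1) + v·2^s` with `0 ≤ μ(v) < r < q` and `s ≥ 0`. -/
theorem statement_19 (q n : ℕ) (hq : 1 ≤ q) (hn : 1 ≤ n) (h : binMu n < q) :
    ∃ s r v : ℕ, binMu v < r ∧ r < q ∧ n = r * (2 ^ s - 1) + v * 2 ^ s := by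
  have hs := bMu_spec n
  generalize binMu n = k at hs h
  have hk : 1 ≤ k := by
    by_contra hk
    obtain rfl : k = 0 := by omega
    have hp : ∀ m : ℕ, 1 ≤ m → 1 ≤ binAlpha m := by
      intro m
      induction m using Nat.strong_induction_on with
      | _ m ih =>
        intro hm
        obtain ⟨u, rfl | rfl⟩ := Nat.even_or_odd' m
        · rw [bA_even]; exact ih u (by omega) (by omega)
        · rw [bA_odd]; omega
    have := hp n hn
    simp at hs
    omega
  obtain ⟨s, w, h1, h2, h3⟩ := bA_key k hk (n + k) (by omega) hs
  refine ⟨s, k, w - k, ?_, h, ?_⟩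
  · have : binMu (w - k) ≤ k - 1 := by
      apply Nat.sInf_le
      show binAlpha (w - k + (k - 1)) ≤ k - 1
      rw [show w - k + (k - 1) = w - 1 by omega]
      exact h3
    omega
  · obtain ⟨v, rfl⟩ := Nat.exists_eq_add_of_le h2
    obtain ⟨p, hp⟩ := Nat.exists_eq_add_of_le (Nat.one_le_two_pow (n := s))
    rw [hp] at h1 ⊢
    rw [Nat.add_sub_cancel_left, Nat.add_sub_cancel_left]
    nlinarith
end
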